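/- Let c be a maximal composition with at least 3 parts. Then c can be written as c = x_0 ⊕ (3) ⊕ x_1 ⊕ (3) ⊕ ⋯ ⊕ (3) ⊕ x_k for some k ≥ 1 and compositions x_0, x_1, …, x_k (possibly empty) such that x_0 ∈ {ε, (4)}, x_k ∈ {ε, (2), (2,2)}, and x_i ∈ {ε, (2), (4)} for each i with 1 ≤ i ≤ k−1. -/

import Mathlib

/-- `i` (1-based, with `1 < i < n`) is a peak of the permutation `σ` of `{1,…,n}`
(represented as a permutation of `Fin n`, position `j` (1-based) being index `j-1`). -/
def IsPeak {n : ℕ} (σ : Equiv.Perm (Fin n)) (i : ℕ) : Prop :=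
  ∃ (h₂ : 2 ≤ i) (h₃ : i < n),
    σ ⟨i - 2, by omega⟩ < σ ⟨i - 1, by omega⟩ ∧ σ ⟨i, h₃⟩ < σ ⟨i - 1, by omega⟩

open Classical in
/-- The peak set of a permutation of `{1,…,n}` (as a set of 1-based positions). -/
noncomputable def peakSet {n : ℕ} (σ : Equiv.Perm (Fin n)) : Finset ℕ :=
  (Finset.range n).filter (fun i => IsPeak σ i)

/-- `P(S;n)`: the number of permutations of `{1,…,n}` with peak set `S`. -/
noncomputable def numPeakSet (n : ℕ) (S : Finset ℕ) : ℕ :=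
  Nat.card {σ : Equiv.Perm (Fin n) // peakSet σ = S}

/-- `c` is a composition of `n`: a list of positive integers summing to `n`. -/
def IsComposition (n : ℕ) (c : List ℕ) : Prop :=
  (∀ x ∈ c, 0 < x) ∧ c.sum = n

/-- The set `S(c)` of proper partial sums of the composition `c`. -/
def compPeaks (c : List ℕ) : Finset ℕ :=
  (Finset.range (c.length - 1)).image (fun i => (c.take (i + 1)).sum)

/-- `P(c)`: the number of permutations of `{1,…,|c|}` whose peak set is `S(c)`. -/
noncomputable def Pcomp (c : List ℕ) : ℕ :=
  numPeakSet c.sum (compPeaks c)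

/-- A composition is maximal if `P(b) ≤ P(c)` for every composition `b` of the same size. -/
def IsMaximal (c : List ℕ) : Prop :=
  ∀ b : List ℕ, IsComposition c.sum b → Pcomp b ≤ Pcomp c

/-- `chain3 c k = c 0 ⊕ (3) ⊕ c 1 ⊕ (3) ⊕ ⋯ ⊕ (3) ⊕ c k`. -/
def chain3 (c : ℕ → List ℕ) : ℕ → List ℕ
  | 0 => c 0
  | k + 1 => chain3 c k ++ [3] ++ c (k + 1)

/-!
Replace a random permutation of `[n]` by independent uniform heights `z₁, …, z_n ∈ [0, 1]`. Between
two consecutive peaks the path of heights falls and then rises, and the volume of such a valley of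
length `a` between peaks of heights `x` and `y` is an explicit kernel `valleyKernel a x y`.
Adding a virtual peak of height `1` at both ends, `P(c) / n!` becomes the iterated kernel, evaluated
at `(1, 1)`, of `c` with its last part increased by one. All kernels are positive, so replacing a
block of parts by another block of the same size with a pointwise larger kernel increases `P`.
Finitely many explicit comparisons between small blocks, and the splitting of any part `a ≥ 6` into
two halves, rule out everything but the canonical form.
-/

open MeasureTheory

open scoped Nat ENNReal

section Kernels

/-- The valley kernel: for heights `x y ∈ [0, 1]` and `a ≥ 2`, the volume of the set of
`t ∈ [0, 1] ^ (a - 1)` for which the path `x, t₁, …, t_{a-1}, y` first decreases and then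
increases, with at least one step of each kind. -/
noncomputable def valleyKernel (a : ℕ) (x y : ℝ) : ℝ :=
  ((x + y) ^ (a - 1) - |x - y| ^ (a - 1)) / (2 * (a - 1)!)

/-- The iterated valley kernel of a composition: the volume of the paths from height `x` to height
`y` that run through valleys of the prescribed lengths, the heights of the intermediate peaks being
integrated out. The empty composition gets the junk value `0`. -/
noncomputable def compKernel : List ℕ → ℝ → ℝ → ℝ
  | [], _, _ => 0
  | [a], x, y => valleyKernel a x y
  | a :: b :: l, x, y => ∫ t in (0 : ℝ)..1, valleyKernel a x t * compKernel (b :: l) t y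

variable {a : ℕ} {l L R B B' : List ℕ} {x y : ℝ}

@[fun_prop]
theorem continuous_valleyKernel {X : Type*} [TopologicalSpace X] {f g : X → ℝ}
    (hf : Continuous f) (hg : Continuous g) : Continuous fun p => valleyKernel a (f p) (g p) := by
  unfold valleyKernel
  fun_prop

theorem valleyKernel_comm (a : ℕ) (x y : ℝ) : valleyKernel a x y = valleyKernel a y x := by
  rw [valleyKernel, valleyKernel, add_comm x y, abs_sub_comm]

theorem valleyKernel_one (x y : ℝ) : valleyKernel 1 x y = 0 := by
  simp [valleyKernel]

theorem abs_sub_le_add_of_nonneg (hx : 0 ≤ x) (hy : 0 ≤ y) : |x - y| ≤ x + y :=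
  abs_sub_le_iff.2 ⟨by linarith, by linarith⟩

theorem valleyKernel_nonneg (hx : 0 ≤ x) (hy : 0 ≤ y) : 0 ≤ valleyKernel a x y :=
  div_nonneg (sub_nonneg.2 (pow_le_pow_left₀ (abs_nonneg _) (abs_sub_le_add_of_nonneg hx hy) _))
    (by positivity)

theorem valleyKernel_pos (ha : 2 ≤ a) (hx : 0 < x) (hy : 0 < y) : 0 < valleyKernel a x y := by
  have abs_sub_lt : |x - y| < x + y := abs_sub_lt_iff.2 ⟨by linarith, by linarith⟩
  exact div_pos (sub_pos.2 (pow_lt_pow_left₀ abs_sub_lt (abs_nonneg _) (by omega))) (by positivity)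

theorem compKernel_singleton (a : ℕ) : compKernel [a] = valleyKernel a := rfl

theorem compKernel_cons (a : ℕ) (hl : l ≠ []) (x y : ℝ) :
    compKernel (a :: l) x y = ∫ t in (0 : ℝ)..1, valleyKernel a x t * compKernel l t y := by
  obtain ⟨b, l, rfl⟩ := List.exists_cons_of_ne_nil hl
  rfl

@[fun_prop]
theorem continuous_compKernel {X : Type*} [TopologicalSpace X] {f g : X → ℝ}
    (hf : Continuous f) (hg : Continuous g) : Continuous fun p => compKernel l (f p) (g p) := by
  suffices h : Continuous fun p : ℝ × ℝ => compKernel l p.1 p.2 from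
    h.comp (hf.prodMk hg)
  induction l with
  | nil => exact continuous_const
  | cons a l ih =>
    rcases eq_or_ne l [] with rfl | hl
    · simp only [compKernel_singleton]
      fun_prop
    · simp only [compKernel_cons a hl]
      have inner : Continuous fun q : (ℝ × ℝ) × ℝ => compKernel l q.2 q.1.2 :=
        ih.comp (by fun_prop : Continuous fun q : (ℝ × ℝ) × ℝ => (q.2, q.1.2))
      exact intervalIntegral.continuous_parametric_intervalIntegral_of_continuous'
        (by unfold Function.uncurry; fun_prop) 0 1

theorem compKernel_eq_zero_of_one_mem (h : 1 ∈ l) (x y : ℝ) : compKernel l x y = 0 := by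
  induction l generalizing x with
  | nil => simp at h
  | cons a l ih =>
    rcases eq_or_ne l [] with rfl | hl
    · rw [← List.mem_singleton.1 h, compKernel_singleton, valleyKernel_one]
    · rw [compKernel_cons a hl]
      rcases List.mem_cons.1 h with rfl | h
      · simp [valleyKernel_one]
      · simp [ih h]

theorem compKernel_nonneg (hx : 0 ≤ x) (hy : 0 ≤ y) : 0 ≤ compKernel l x y := by
  induction l generalizing x with
  | nil => exact le_rfl
  | cons a l ih =>
    rcases eq_or_ne l [] with rfl | hl
    · exact valleyKernel_nonneg hx hy
    · rw [compKernel_cons a hl]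
      exact intervalIntegral.integral_nonneg zero_le_one fun t ht =>
        mul_nonneg (valleyKernel_nonneg hx ht.1) (ih ht.1)

theorem intervalIntegral_pos_of_continuous {f : ℝ → ℝ} (hf : Continuous f)
    (h : ∀ t ∈ Set.Ioo (0 : ℝ) 1, 0 < f t) : 0 < ∫ t in (0 : ℝ)..1, f t :=
  intervalIntegral.intervalIntegral_pos_of_pos_on (hf.intervalIntegrable 0 1) h zero_lt_one

theorem intervalIntegral_lt_of_continuous {f g : ℝ → ℝ} (hf : Continuous f) (hg : Continuous g)
    (h : ∀ t ∈ Set.Ioo (0 : ℝ) 1, f t < g t) : ∫ t in (0 : ℝ)..1, f t < ∫ t in (0 : ℝ)..1, g t := by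
  rw [← sub_pos, ← intervalIntegral.integral_sub (hg.intervalIntegrable 0 1)
    (hf.intervalIntegrable 0 1)]
  exact intervalIntegral_pos_of_continuous (by fun_prop) fun t ht => sub_pos.2 (h t ht)

theorem compKernel_pos (hl : l ≠ []) (h2 : ∀ a ∈ l, 2 ≤ a) (hx : 0 < x) (hy : 0 < y) :
    0 < compKernel l x y := by
  induction l generalizing x with
  | nil => exact absurd rfl hl
  | cons a l ih =>
    obtain ⟨ha, h2⟩ := List.forall_mem_cons.1 h2
    rcases eq_or_ne l [] with rfl | hl
    · exact valleyKernel_pos ha hx hy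
    · rw [compKernel_cons a hl]
      exact intervalIntegral_pos_of_continuous (by fun_prop) fun t ht =>
        mul_pos (valleyKernel_pos ha hx ht.1) (ih hl h2 ht.1)

theorem integral_integral_swap_of_continuous {f : ℝ → ℝ → ℝ}
    (hf : Continuous (Function.uncurry f)) :
    ∫ s in (0 : ℝ)..1, ∫ t in (0 : ℝ)..1, f s t = ∫ t in (0 : ℝ)..1, ∫ s in (0 : ℝ)..1, f s t :=
  intervalIntegral_intervalIntegral_swap <|
    (hf.continuousOn.integrableOn_compact (isCompact_uIcc.prod isCompact_uIcc)).mono_set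
      (Set.prod_mono Set.uIoc_subset_uIcc Set.uIoc_subset_uIcc)

theorem compKernel_append (hL : L ≠ []) (hR : R ≠ []) (x y : ℝ) :
    compKernel (L ++ R) x y = ∫ t in (0 : ℝ)..1, compKernel L x t * compKernel R t y := by
  induction L generalizing x with
  | nil => exact absurd rfl hL
  | cons a L ih =>
    rcases eq_or_ne L [] with rfl | hL
    · exact compKernel_cons a hR x y
    · calc
        compKernel (a :: (L ++ R)) x y
          = ∫ s in (0 : ℝ)..1, ∫ t in (0 : ℝ)..1,
              valleyKernel a x s * (compKernel L s t * compKernel R t y) := by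
            rw [compKernel_cons a (by simp [hL])]
            simp_rw [ih hL, intervalIntegral.integral_const_mul]
        _ = ∫ t in (0 : ℝ)..1, ∫ s in (0 : ℝ)..1,
              valleyKernel a x s * compKernel L s t * compKernel R t y := by
            simp_rw [mul_assoc]
            exact integral_integral_swap_of_continuous (by unfold Function.uncurry; fun_prop)
        _ = ∫ t in (0 : ℝ)..1, compKernel (a :: L) x t * compKernel R t y := by
            simp_rw [intervalIntegral.integral_mul_const, compKernel_cons a hL]

/-- The heights at the boundary between a block of parts and the rest `l` of the composition:
the boundary point is the virtual peak of height `1` if nothing is left. -/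
def boundaryHeights : List ℕ → Set ℝ
  | [] => {1}
  | _ :: _ => Set.Ioo 0 1

theorem boundaryHeights_of_ne_nil (hl : l ≠ []) : boundaryHeights l = Set.Ioo 0 1 := by
  obtain ⟨b, l, rfl⟩ := List.exists_cons_of_ne_nil hl
  rfl

theorem boundaryHeights_subset (l : List ℕ) : boundaryHeights l ⊆ Set.Ioc 0 1 := by
  rcases l with _ | ⟨_, _⟩
  · simp [boundaryHeights]
  · exact Set.Ioo_subset_Ioc_self

theorem compKernel_append_right_lt (hB : B ≠ []) (hB' : B' ≠ []) (hR : ∀ a ∈ R, 2 ≤ a)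
    (h : ∀ y ∈ boundaryHeights R, compKernel B x y < compKernel B' x y) :
    compKernel (B ++ R) x 1 < compKernel (B' ++ R) x 1 := by
  rcases eq_or_ne R [] with rfl | hR'
  · simpa using h 1 rfl
  · rw [boundaryHeights_of_ne_nil hR'] at h
    rw [compKernel_append hB hR', compKernel_append hB' hR']
    exact intervalIntegral_lt_of_continuous (by fun_prop) (by fun_prop) fun t ht =>
      mul_lt_mul_of_pos_right (h t ht) (compKernel_pos hR' hR ht.1 zero_lt_one)

theorem compKernel_replace_lt (hB : B ≠ []) (hB' : B' ≠ []) (hL : ∀ a ∈ L, 2 ≤ a)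
    (hR : ∀ a ∈ R, 2 ≤ a)
    (h : ∀ x ∈ boundaryHeights L, ∀ y ∈ boundaryHeights R, compKernel B x y < compKernel B' x y) :
    compKernel (L ++ (B ++ R)) 1 1 < compKernel (L ++ (B' ++ R)) 1 1 := by
  have right : ∀ x ∈ boundaryHeights L, compKernel (B ++ R) x 1 < compKernel (B' ++ R) x 1 :=
    fun x hx => compKernel_append_right_lt hB hB' hR (h x hx)
  rcases eq_or_ne L [] with rfl | hL'
  · simpa using right 1 rfl
  · rw [boundaryHeights_of_ne_nil hL'] at right
    rw [compKernel_append hL' (by simp [hB]), compKernel_append hL' (by simp [hB'])]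
    exact intervalIntegral_lt_of_continuous (by fun_prop) (by fun_prop) fun t ht =>
      mul_lt_mul_of_pos_left (right t ht) (compKernel_pos hL' hL zero_lt_one ht.1)

end Kernels

section LocalInequalities

variable {a : ℕ} {l : List ℕ} {s t x y : ℝ}

theorem compKernel_reverse (l : List ℕ) (x y : ℝ) :
    compKernel l.reverse x y = compKernel l y x := by
  induction l generalizing y with
  | nil => rfl
  | cons a l ih =>
    rcases eq_or_ne l [] with rfl | hl
    · exact valleyKernel_comm a x y
    · rw [List.reverse_cons, compKernel_append (by simpa using hl) (by simp), compKernel_cons a hl]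
      simp_rw [ih, compKernel_singleton, valleyKernel_comm a _ y, mul_comm]

theorem compKernel_reverse_lt_iff {l l' : List ℕ} :
    compKernel l.reverse x y < compKernel l'.reverse x y ↔
      compKernel l y x < compKernel l' y x := by
  rw [compKernel_reverse, compKernel_reverse]

theorem integral_add_of_continuous {f g : ℝ → ℝ} (hf : Continuous f) (hg : Continuous g)
    (x y : ℝ) : ∫ t in x..y, (f t + g t) = (∫ t in x..y, f t) + ∫ t in x..y, g t :=
  intervalIntegral.integral_add (hf.intervalIntegrable x y) (hg.intervalIntegrable x y)

theorem integral_split_of_continuous {f : ℝ → ℝ} (hf : Continuous f) (x : ℝ) :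
    ∫ t in (0 : ℝ)..1, f t = (∫ t in (0 : ℝ)..x, f t) + ∫ t in x..1, f t :=
  (intervalIntegral.integral_add_adjacent_intervals (hf.intervalIntegrable _ _)
    (hf.intervalIntegrable _ _)).symm

theorem integral_congr_of_nonneg_of_le_one {f g : ℝ → ℝ} (h : ∀ t, 0 ≤ t → t ≤ 1 → f t = g t) :
    ∫ t in (0 : ℝ)..1, f t = ∫ t in (0 : ℝ)..1, g t :=
  intervalIntegral.integral_congr fun t ht => by
    rw [Set.uIcc_of_le zero_le_one] at ht
    exact h t ht.1 ht.2

theorem integral_le_of_continuous {f g : ℝ → ℝ} (hf : Continuous f) (hg : Continuous g)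
    (h : ∀ t, 0 ≤ t → t ≤ 1 → f t ≤ g t) : ∫ t in (0 : ℝ)..1, f t ≤ ∫ t in (0 : ℝ)..1, g t :=
  intervalIntegral.integral_mono_on zero_le_one (hf.intervalIntegrable 0 1)
    (hg.intervalIntegrable 0 1) fun t ht => h t ht.1 ht.2

theorem valleyKernel_two (x y : ℝ) : valleyKernel 2 x y = min x y := by
  rcases le_total x y with h | h
  · simp only [valleyKernel, abs_of_nonpos (sub_nonpos.2 h), min_eq_left h, Nat.add_one_sub_one,
      Nat.factorial_one]
    ring
  · simp [valleyKernel, abs_of_nonneg (sub_nonneg.2 h), min_eq_right h]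

theorem valleyKernel_three (x y : ℝ) : valleyKernel 3 x y = x * y := by
  simp only [valleyKernel, sq_abs, Nat.add_one_sub_one, Nat.factorial_two]
  ring

theorem valleyKernel_four (h : y ≤ x) : valleyKernel 4 x y = (3 * x ^ 2 * y + y ^ 3) / 6 := by
  simp only [valleyKernel, abs_of_nonneg (sub_nonneg.2 h), Nat.add_one_sub_one, Nat.factorial]
  ring

theorem valleyKernel_five (x y : ℝ) : valleyKernel 5 x y = x * y * (x ^ 2 + y ^ 2) / 6 := by
  simp only [valleyKernel, Even.pow_abs (by decide : Even 4), Nat.add_one_sub_one, Nat.factorial]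
  ring

theorem valleyKernel_four_le (hx : 0 ≤ x) (hx1 : x ≤ 1) (ht : 0 ≤ t) (ht1 : t ≤ 1) :
    valleyKernel 4 x t ≤ x * ((t * 3 + t ^ 3) / 6) := by
  rcases le_total t x with h | h
  · have gap : 0 ≤ t * (1 - x) * (3 * x - t ^ 2) :=
      mul_nonneg (mul_nonneg ht (sub_nonneg.2 hx1)) (by nlinarith)
    rw [valleyKernel_four h]
    linarith
  · have gap : 0 ≤ x * (t * (1 - t) * (3 - t) + (t ^ 2 - x ^ 2)) :=
      mul_nonneg hx (add_nonneg (mul_nonneg (mul_nonneg ht (by linarith)) (by linarith))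
        (sub_nonneg.2 (pow_le_pow_left₀ hx h 2)))
    rw [valleyKernel_comm, valleyKernel_four h]
    linarith

theorem compKernel_three_cons (hl : l ≠ []) (x y : ℝ) :
    compKernel (3 :: l) x y = x * ∫ t in (0 : ℝ)..1, t * compKernel l t y := by
  simp_rw [compKernel_cons 3 hl, valleyKernel_three, mul_assoc,
    intervalIntegral.integral_const_mul]

theorem compKernel_cons_three (a : ℕ) (x y : ℝ) :
    compKernel [a, 3] x y = (∫ t in (0 : ℝ)..1, valleyKernel a x t * t) * y := by
  simp_rw [compKernel_cons a (List.cons_ne_nil 3 []), compKernel_singleton, valleyKernel_three,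
    ← mul_assoc, intervalIntegral.integral_mul_const]

theorem compKernel_three_three (x y : ℝ) : compKernel [3, 3] x y = x * y / 3 := by
  rw [compKernel_cons_three]
  simp only [valleyKernel_three, mul_assoc, ← sq, intervalIntegral.integral_const_mul, integral_pow]
  ring

theorem compKernel_two_three (hx : 0 ≤ x) (hx1 : x ≤ 1) (y : ℝ) :
    compKernel [2, 3] x y = (x / 2 - x ^ 3 / 6) * y := by
  have below : ∫ t in (0 : ℝ)..x, min x t * t = ∫ t in (0 : ℝ)..x, t ^ 2 :=
    intervalIntegral.integral_congr fun t ht => by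
      rw [Set.uIcc_of_le hx] at ht
      simp [min_eq_right ht.2, sq]
  have above : ∫ t in x..1, min x t * t = ∫ t in x..1, t * x :=
    intervalIntegral.integral_congr fun t ht => by
      rw [Set.uIcc_of_le hx1] at ht
      simp [min_eq_left ht.1, mul_comm]
  simp only [compKernel_cons_three, valleyKernel_two]
  rw [integral_split_of_continuous (by fun_prop) x, below, above]
  congr 1
  simp only [intervalIntegral.integral_mul_const, integral_id, integral_pow]
  ring

theorem compKernel_four_three (hx : 0 ≤ x) (hx1 : x ≤ 1) (y : ℝ) :
    compKernel [4, 3] x y = (x / 8 + x ^ 3 / 12 - x ^ 5 / 120) * y := by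
  have below : ∫ t in (0 : ℝ)..x, valleyKernel 4 x t * t =
      ∫ t in (0 : ℝ)..x, (x ^ 2 / 2 * t ^ 2 + 1 / 6 * t ^ 4) :=
    intervalIntegral.integral_congr fun t ht => by
      rw [Set.uIcc_of_le hx] at ht
      simp only [valleyKernel_four ht.2]
      ring
  have above : ∫ t in x..1, valleyKernel 4 x t * t =
      ∫ t in x..1, (x / 2 * t ^ 3 + t * (x ^ 3 / 6)) :=
    intervalIntegral.integral_congr fun t ht => by
      rw [Set.uIcc_of_le hx1] at ht
      simp only [valleyKernel_comm 4 x, valleyKernel_four ht.1]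
      ring
  rw [compKernel_cons_three, integral_split_of_continuous (by fun_prop) x, below, above]
  congr 1
  simp (disch := fun_prop) only [integral_add_of_continuous, intervalIntegral.integral_const_mul,
    intervalIntegral.integral_mul_const, integral_id, integral_pow]
  ring

theorem compKernel_three_two (x : ℝ) (hy : 0 ≤ y) (hy1 : y ≤ 1) :
    compKernel [3, 2] x y = (y / 2 - y ^ 3 / 6) * x := by
  rw [← compKernel_two_three hy hy1, ← compKernel_reverse]
  rfl

theorem compKernel_three_two_three (x y : ℝ) : compKernel [3, 2, 3] x y = 2 / 15 * (x * y) := by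
  have moment : ∫ t in (0 : ℝ)..1, t * compKernel [2, 3] t y =
      ∫ t in (0 : ℝ)..1, (y / 2 * t ^ 2 + -y / 6 * t ^ 4) :=
    integral_congr_of_nonneg_of_le_one fun t ht ht1 => by
      rw [compKernel_two_three ht ht1]
      ring
  rw [compKernel_three_cons (by simp), moment]
  simp (disch := fun_prop) only [integral_add_of_continuous, intervalIntegral.integral_const_mul,
    integral_pow]
  ring

theorem compKernel_three_four_three (x y : ℝ) : compKernel [3, 4, 3] x y = 2 / 35 * (x * y) := by
  have moment : ∫ t in (0 : ℝ)..1, t * compKernel [4, 3] t y =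
      ∫ t in (0 : ℝ)..1, (y / 8 * t ^ 2 + y / 12 * t ^ 4 + -y / 120 * t ^ 6) :=
    integral_congr_of_nonneg_of_le_one fun t ht ht1 => by
      rw [compKernel_four_three ht ht1]
      ring
  rw [compKernel_three_cons (by simp), moment]
  simp (disch := fun_prop) only [integral_add_of_continuous, intervalIntegral.integral_const_mul,
    integral_pow]
  ring

theorem compKernel_three_two_two_three (x y : ℝ) :
    compKernel [3, 2, 2, 3] x y = 17 / 315 * (x * y) := by
  have square : ∫ t in (0 : ℝ)..1, compKernel [3, 2] x t * compKernel [2, 3] t y =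
      ∫ t in (0 : ℝ)..1, x * y * (1 / 4 * t ^ 2 + -1 / 6 * t ^ 4 + 1 / 36 * t ^ 6) :=
    integral_congr_of_nonneg_of_le_one fun t ht ht1 => by
      rw [compKernel_three_two x ht ht1, compKernel_two_three ht ht1]
      ring
  rw [show [3, 2, 2, 3] = [3, 2] ++ [2, 3] from rfl,
    compKernel_append (by simp) (by simp), square]
  simp (disch := fun_prop) only [integral_add_of_continuous, intervalIntegral.integral_const_mul,
    integral_pow]
  ring

theorem compKernel_three_three_four (x : ℝ) : compKernel [3, 3, 4] x 1 = 1 / 15 * x := by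
  have moment : ∫ t in (0 : ℝ)..1, t * compKernel [3, 4] t 1 = ∫ t in (0 : ℝ)..1, 1 / 5 * t ^ 2 :=
    integral_congr_of_nonneg_of_le_one fun t _ _ => by
      rw [← compKernel_reverse, show [3, 4].reverse = [4, 3] from rfl,
        compKernel_four_three zero_le_one le_rfl]
      ring
  rw [compKernel_three_cons (by simp), moment]
  simp only [intervalIntegral.integral_const_mul, integral_pow]
  ring

theorem compKernel_two_two_one_left (y : ℝ) :
    compKernel [2, 2] 1 y = compKernel [3, 2] 1 y := by
  simp only [compKernel_cons _ (List.cons_ne_nil 2 [])]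
  exact integral_congr_of_nonneg_of_le_one fun t _ ht1 => by
    rw [valleyKernel_two, valleyKernel_three, min_eq_right ht1, one_mul]

theorem compKernel_five_lt (hx : 0 < x) (hx1 : x ≤ 1) (hy : 0 < y) (hy1 : y ≤ 1)
    (h : x < 1 ∨ y < 1) : compKernel [5] x y < compKernel [3, 2] x y := by
  have gap : 0 < x * y * (3 - 2 * y ^ 2 - x ^ 2) := by
    refine mul_pos (mul_pos hx hy) ?_
    rcases h with h | h <;> nlinarith
  rw [compKernel_singleton, valleyKernel_five, compKernel_three_two x hy.le hy1]
  linarith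

theorem compKernel_four_four_lt (hx : 0 < x) (hx1 : x ≤ 1) (hy : 0 < y) (hy1 : y ≤ 1) :
    compKernel [4, 4] x y < compKernel [3, 2, 3] x y := by
  calc
    compKernel [4, 4] x y = ∫ t in (0 : ℝ)..1, valleyKernel 4 x t * valleyKernel 4 t y :=
      compKernel_cons 4 (by simp) x y
    _ ≤ ∫ t in (0 : ℝ)..1, x * ((t * 3 + t ^ 3) / 6) * (y * ((t * 3 + t ^ 3) / 6)) :=
      integral_le_of_continuous (by fun_prop) (by fun_prop) fun t ht ht1 => by
        rw [valleyKernel_comm 4 t]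
        exact mul_le_mul (valleyKernel_four_le hx.le hx1 ht ht1)
          (valleyKernel_four_le hy.le hy1 ht ht1) (valleyKernel_nonneg hy.le ht) (by positivity)
    _ = 38 / 315 * (x * y) := by
      ring_nf
      simp (disch := fun_prop) only [integral_add_of_continuous,
        intervalIntegral.integral_const_mul, intervalIntegral.integral_mul_const, integral_pow]
      ring
    _ < 2 / 15 * (x * y) := by linarith [mul_pos hx hy]
    _ = compKernel [3, 2, 3] x y := (compKernel_three_two_three x y).symm

theorem compKernel_two_four_lt (hx : 0 < x) (hy : 0 < y) (hy1 : y ≤ 1) :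
    compKernel [2, 4] x y < compKernel [3, 3] x y := by
  calc
    compKernel [2, 4] x y = ∫ t in (0 : ℝ)..1, valleyKernel 2 x t * valleyKernel 4 t y :=
      compKernel_cons 2 (by simp) x y
    _ ≤ ∫ t in (0 : ℝ)..1, x * (y * ((t * 3 + t ^ 3) / 6)) :=
      integral_le_of_continuous (by fun_prop) (by fun_prop) fun t ht ht1 => by
        rw [valleyKernel_comm 4 t, valleyKernel_two]
        exact mul_le_mul (min_le_left x t) (valleyKernel_four_le hy.le hy1 ht ht1)
          (valleyKernel_nonneg hy.le ht) hx.le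
    _ = x * (y * (∫ t in (0 : ℝ)..1, (t * 3 + t ^ 3)) / 6) := by
      simp only [intervalIntegral.integral_const_mul, intervalIntegral.integral_div, mul_div_assoc]
    _ = 7 / 24 * (x * y) := by
      simp (disch := fun_prop) only [integral_add_of_continuous,
        intervalIntegral.integral_mul_const, integral_id, integral_pow]
      ring
    _ < x * y / 3 := by linarith [mul_pos hx hy]
    _ = compKernel [3, 3] x y := (compKernel_three_three x y).symm

theorem compKernel_four_two_lt (hx : 0 < x) (hx1 : x ≤ 1) (hy : 0 < y) :
    compKernel [4, 2] x y < compKernel [3, 3] x y :=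
  compKernel_reverse_lt_iff (l := [2, 4]) (l' := [3, 3]).2 (compKernel_two_four_lt hy hx hx1)

theorem integral_min (hs : 0 ≤ s) (hs1 : s ≤ 1) :
    ∫ t in (0 : ℝ)..1, min s t = s - s ^ 2 / 2 := by
  have below : ∫ t in (0 : ℝ)..s, min s t = ∫ t in (0 : ℝ)..s, t :=
    intervalIntegral.integral_congr fun _ ht => by
      rw [Set.uIcc_of_le hs] at ht
      exact min_eq_right ht.2
  have above : ∫ t in s..1, min s t = ∫ _ in s..1, s :=
    intervalIntegral.integral_congr fun _ ht => by
      rw [Set.uIcc_of_le hs1] at ht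
      exact min_eq_left ht.1
  rw [integral_split_of_continuous (by fun_prop) s, below, above]
  simp only [integral_id, intervalIntegral.integral_const, smul_eq_mul]
  ring

theorem compKernel_two_two_lt (hs : 0 < s) (hs1 : s ≤ 1) (hy : 0 < y) (hy1 : y ≤ 1) :
    compKernel [2, 2] s y < (s - s ^ 2 / 2) * y := by
  calc
    compKernel [2, 2] s y = ∫ t in (0 : ℝ)..1, min s t * min t y := by
      simp only [compKernel_cons 2 (List.cons_ne_nil 2 []), compKernel_singleton,
        valleyKernel_two]
    _ < ∫ t in (0 : ℝ)..1, min s t * y := by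
      refine intervalIntegral.integral_lt_integral_of_continuousOn_of_le_of_exists_lt zero_lt_one
        (by fun_prop) (by fun_prop)
        (fun t ht => mul_le_mul_of_nonneg_left (min_le_right t y) (le_min hs.le ht.1.le))
        ⟨y / 2, ⟨by linarith, by linarith⟩, ?_⟩
      have : min (y / 2) y < y := min_lt_of_left_lt (by linarith)
      exact mul_lt_mul_of_pos_left this (lt_min hs (by linarith))
    _ = (s - s ^ 2 / 2) * y := by
      rw [intervalIntegral.integral_mul_const, integral_min hs.le hs1]

theorem compKernel_two_two_two_lt (hx : 0 < x) (hy : 0 < y) (hy1 : y ≤ 1) :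
    compKernel [2, 2, 2] x y < compKernel [3, 3] x y := by
  calc
    compKernel [2, 2, 2] x y = ∫ s in (0 : ℝ)..1, min x s * compKernel [2, 2] s y := by
      simp only [compKernel_cons 2 (List.cons_ne_nil 2 [2]), valleyKernel_two]
    _ < ∫ s in (0 : ℝ)..1, x * ((s - s ^ 2 / 2) * y) :=
      intervalIntegral_lt_of_continuous (by fun_prop) (by fun_prop) fun s hs =>
        mul_lt_mul' (min_le_left x s) (compKernel_two_two_lt hs.1 hs.2.le hy hy1)
          (compKernel_nonneg hs.1.le hy.le) hx
    _ = x * y / 3 := by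
      simp (disch := fun_prop) only [sub_eq_add_neg, integral_add_of_continuous,
        intervalIntegral.integral_const_mul, intervalIntegral.integral_mul_const,
        intervalIntegral.integral_neg, intervalIntegral.integral_div, integral_id, integral_pow]
      ring
    _ = compKernel [3, 3] x y := (compKernel_three_three x y).symm

theorem compKernel_three_two_two_three_lt (hx : 0 < x) (hy : 0 < y) :
    compKernel [3, 2, 2, 3] x y < compKernel [3, 4, 3] x y := by
  rw [compKernel_three_two_two_three, compKernel_three_four_three]
  linarith [mul_pos hx hy]

theorem compKernel_two_three_one_left_lt (hy : 0 < y) (hy1 : y < 1) :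
    compKernel [2, 3] 1 y < compKernel [3, 2] 1 y := by
  have gap : 0 < y * (1 - y ^ 2) := mul_pos hy (by nlinarith)
  rw [compKernel_two_three zero_le_one le_rfl, compKernel_three_two 1 hy.le hy1.le]
  linarith

theorem compKernel_two_two_one_left_lt (hy : 0 < y) (hy1 : y ≤ 1) :
    compKernel [2, 2] 1 y < compKernel [4] 1 y := by
  rw [compKernel_two_two_one_left, compKernel_three_two 1 hy.le hy1, compKernel_singleton,
    valleyKernel_four hy1]
  linarith [pow_pos hy 3]

theorem compKernel_three_two_one_right_lt (hx : 0 < x) (hx1 : x < 1) :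
    compKernel [3, 2] x 1 < compKernel [2, 3] x 1 :=
  compKernel_reverse_lt_iff.2 (compKernel_two_three_one_left_lt hx hx1)

theorem compKernel_two_two_one_right_lt (hx : 0 < x) (hx1 : x ≤ 1) :
    compKernel [2, 2] x 1 < compKernel [4] x 1 :=
  compKernel_reverse_lt_iff.2 (compKernel_two_two_one_left_lt hx hx1)

theorem compKernel_three_four_three_one_right_lt (hx : 0 < x) :
    compKernel [3, 4, 3] x 1 < compKernel [3, 3, 4] x 1 := by
  rw [compKernel_three_four_three, compKernel_three_three_four]
  linarith

theorem two_mul_pow_le_add_pow_add_sub_pow (hy : 0 ≤ y) (hxy : y ≤ x) (n : ℕ) :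
    2 * x ^ n ≤ (x + y) ^ n + (x - y) ^ n := by
  rcases n with _ | n
  · norm_num
  · have mean := add_pow_le (by linarith : 0 ≤ x + y) (sub_nonneg.2 hxy) (n + 1)
    have : 2 ^ n * (2 * x ^ (n + 1)) ≤ 2 ^ n * ((x + y) ^ (n + 1) + (x - y) ^ (n + 1)) := by
      calc
        2 ^ n * (2 * x ^ (n + 1)) = (x + y + (x - y)) ^ (n + 1) := by ring
        _ ≤ _ := mean
    exact le_of_mul_le_mul_left this (by positivity)

theorem two_mul_pow_mul_le_add_pow_sub_sub_pow (hy : 0 ≤ y) (hxy : y ≤ x) (n : ℕ) :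
    2 * (n + 1) * x ^ n * y ≤ (x + y) ^ (n + 1) - (x - y) ^ (n + 1) := by
  induction n with
  | zero =>
    norm_num
    linarith
  | succ n ih =>
    calc
      2 * ((n + 1 : ℕ) + 1) * x ^ (n + 1) * y
        = x * (2 * (n + 1) * x ^ n * y) + y * (2 * x ^ (n + 1)) := by
          push_cast
          ring
      _ ≤ x * ((x + y) ^ (n + 1) - (x - y) ^ (n + 1)) +
            y * ((x + y) ^ (n + 1) + (x - y) ^ (n + 1)) :=
          add_le_add (mul_le_mul_of_nonneg_left ih (hy.trans hxy))
            (mul_le_mul_of_nonneg_left (two_mul_pow_le_add_pow_add_sub_pow hy hxy _) hy)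
      _ = (x + y) ^ (n + 1 + 1) - (x - y) ^ (n + 1 + 1) := by ring

theorem mul_pow_div_factorial_le_valleyKernel (hx : 0 ≤ x) (ht : 0 ≤ t) (p : ℕ) :
    x * t ^ (p + 1) / (p + 1)! ≤ valleyKernel (p + 3) x t := by
  have main : 2 * (p + 2) * t ^ (p + 1) * x ≤ (x + t) ^ (p + 2) - |x - t| ^ (p + 2) := by
    rcases le_total x t with h | h
    · have bound := two_mul_pow_mul_le_add_pow_sub_sub_pow hx h (p + 1)
      rw [abs_sub_comm, abs_of_nonneg (sub_nonneg.2 h), add_comm x t]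
      push_cast at bound
      linarith
    · have bound := two_mul_pow_mul_le_add_pow_sub_sub_pow ht h (p + 1)
      rw [abs_of_nonneg (sub_nonneg.2 h)]
      push_cast at bound
      calc
        2 * (p + 2) * t ^ (p + 1) * x = 2 * (p + 2) * (x * t) * t ^ p := by ring
        _ ≤ 2 * (p + 2) * (x * t) * x ^ p := by gcongr
        _ = 2 * (p + 1 + 1) * x ^ (p + 1) * t := by ring
        _ ≤ (x + t) ^ (p + 2) - (x - t) ^ (p + 2) := bound
  rw [valleyKernel, show p + 3 - 1 = p + 2 by rfl, le_div_iff₀ (by positivity)]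
  calc
    x * t ^ (p + 1) / (p + 1)! * (2 * (p + 2)!) = 2 * (p + 2) * t ^ (p + 1) * x := by
      rw [Nat.factorial_succ (p + 1)]
      push_cast
      field_simp
      ring
    _ ≤ _ := main

theorem add_pow_sub_abs_sub_pow_le (hx : 0 ≤ x) (hx1 : x ≤ 1) (hy : 0 ≤ y) (hy1 : y ≤ 1)
    (n : ℕ) : (x + y) ^ (n + 2) - |x - y| ^ (n + 2) ≤ x * y * 2 ^ (n + 2) := by
  induction n with
  | zero =>
    norm_num
    linarith
  | succ n ih =>
    have le_add : |x - y| ≤ x + y := abs_sub_le_add_of_nonneg hx hy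
    have le_two_sub : |x - y| ≤ 2 - (x + y) := abs_sub_le_iff.2 ⟨by linarith, by linarith⟩
    have step : |x - y| ^ (n + 1) * (|x - y| * (2 - |x - y|)) ≤
        (x + y) ^ (n + 1) * ((x + y) * (2 - (x + y))) :=
      mul_le_mul (pow_le_pow_left₀ (abs_nonneg _) le_add _) (by nlinarith)
        (mul_nonneg (abs_nonneg _) (by linarith)) (by positivity)
    calc
      (x + y) ^ (n + 1 + 2) - |x - y| ^ (n + 1 + 2)
        = 2 * ((x + y) ^ (n + 2) - |x - y| ^ (n + 2)) +
            (|x - y| ^ (n + 1) * (|x - y| * (2 - |x - y|)) -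
              (x + y) ^ (n + 1) * ((x + y) * (2 - (x + y)))) := by ring
      _ ≤ 2 * (x * y * 2 ^ (n + 2)) := by linarith
      _ = x * y * 2 ^ (n + 1 + 2) := by ring

theorem valleyKernel_le (hx : 0 ≤ x) (hx1 : x ≤ 1) (hy : 0 ≤ y) (hy1 : y ≤ 1) (n : ℕ) :
    valleyKernel (n + 3) x y ≤ x * y * (2 ^ (n + 1) / (n + 2)!) := by
  rw [valleyKernel, show n + 3 - 1 = n + 2 by rfl, div_le_iff₀ (by positivity)]
  calc
    (x + y) ^ (n + 2) - |x - y| ^ (n + 2) ≤ x * y * 2 ^ (n + 2) :=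
      add_pow_sub_abs_sub_pow_le hx hx1 hy hy1 n
    _ = x * y * (2 ^ (n + 1) / (n + 2)!) * (2 * (n + 2)!) := by
      field_simp
      ring

theorem mul_div_factorial_le_compKernel (hx : 0 ≤ x) (hy : 0 ≤ y) (p q : ℕ) :
    x * y * (1 / ((p + 1)! * (q + 1)! * (p + q + 3))) ≤ compKernel [p + 3, q + 3] x y := by
  calc
    x * y * (1 / ((p + 1)! * (q + 1)! * (p + q + 3)))
      = ∫ t in (0 : ℝ)..1, x * y / ((p + 1)! * (q + 1)!) * t ^ (p + q + 2) := by
        rw [intervalIntegral.integral_const_mul, integral_pow]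
        push_cast
        field_simp
        ring
    _ = ∫ t in (0 : ℝ)..1, x * t ^ (p + 1) / (p + 1)! * (y * t ^ (q + 1) / (q + 1)!) := by
        congr! 2 with t
        rw [show p + q + 2 = (p + 1) + (q + 1) by ring, pow_add]
        field_simp
    _ ≤ ∫ t in (0 : ℝ)..1, valleyKernel (p + 3) x t * valleyKernel (q + 3) t y :=
        integral_le_of_continuous (by fun_prop) (by fun_prop) fun t ht _ => by
          rw [valleyKernel_comm _ t]
          exact mul_le_mul (mul_pow_div_factorial_le_valleyKernel hx ht p)
            (mul_pow_div_factorial_le_valleyKernel hy ht q) (by positivity)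
            (valleyKernel_nonneg hx ht)
    _ = compKernel [p + 3, q + 3] x y :=
        (compKernel_cons (p + 3) (List.cons_ne_nil (q + 3) []) x y).symm

theorem two_pow_le_succ_mul_choose_half (n : ℕ) : 2 ^ n ≤ (n + 1) * n.choose (n / 2) := by
  calc
    2 ^ n = ∑ i ∈ Finset.range (n + 1), n.choose i := (Nat.sum_range_choose n).symm
    _ ≤ ∑ _i ∈ Finset.range (n + 1), n.choose (n / 2) :=
      Finset.sum_le_sum fun i _ => Nat.choose_le_middle i n
    _ = (n + 1) * n.choose (n / 2) := by simp

theorem two_pow_mul_factorial_lt (p q : ℕ) (h : (p + q) / 2 = p) :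
    2 ^ (p + q + 2) * (p ! * q ! * (p + q + 1)) < (p + q + 3)! := by
  have choose_pos : 0 < (p + q).choose p := Nat.choose_pos (Nat.le_add_right p q)
  have two_pow_lt : 2 ^ (p + q + 2) < (p + q + 3) * (p + q + 2) * (p + q).choose p := by
    calc
      2 ^ (p + q + 2) = 4 * 2 ^ (p + q) := by ring
      _ ≤ 4 * ((p + q + 1) * (p + q).choose p) := by
        simpa only [h] using Nat.mul_le_mul_left 4 (two_pow_le_succ_mul_choose_half (p + q))
      _ = 4 * (p + q + 1) * (p + q).choose p := by ring
      _ < (p + q + 3) * (p + q + 2) * (p + q).choose p :=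
        Nat.mul_lt_mul_of_pos_right (by nlinarith) choose_pos
  calc
    2 ^ (p + q + 2) * (p ! * q ! * (p + q + 1))
      < (p + q + 3) * (p + q + 2) * (p + q).choose p * (p ! * q ! * (p + q + 1)) :=
        Nat.mul_lt_mul_of_pos_right two_pow_lt (by positivity)
    _ = (p + q + 3) * (p + q + 2) * (p + q + 1) * ((p + q).choose p * p ! * q !) := by ring
    _ = (p + q + 3)! := by
      rw [Nat.choose_symm_add, Nat.add_choose_mul_factorial_mul_factorial]
      simp only [Nat.factorial_succ]
      ring

theorem exists_compKernel_lt_pair (ha : 6 ≤ a) : ∃ b e, 2 ≤ b ∧ 2 ≤ e ∧ b + e = a ∧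
    ∀ x ∈ Set.Ioc (0 : ℝ) 1, ∀ y ∈ Set.Ioc (0 : ℝ) 1,
      compKernel [a] x y < compKernel [b, e] x y := by
  obtain ⟨p, q, rfl, half⟩ : ∃ p q, a = p + q + 6 ∧ (p + 1 + (q + 1)) / 2 = p + 1 :=
    ⟨a / 2 - 3, a - a / 2 - 3, by omega, by omega⟩
  refine ⟨p + 3, q + 3, by omega, by omega, by omega, fun x hx y hy => ?_⟩
  calc
    compKernel [p + q + 6] x y ≤ x * y * (2 ^ (p + q + 4) / (p + q + 5)!) :=
      valleyKernel_le hx.1.le hx.2 hy.1.le hy.2 (p + q + 3)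
    _ < x * y * (1 / ((p + 1)! * (q + 1)! * (p + q + 3))) := by
      refine mul_lt_mul_of_pos_left ?_ (mul_pos hx.1 hy.1)
      rw [div_lt_div_iff₀ (by positivity) (by positivity), one_mul]
      have := two_pow_mul_factorial_lt (p + 1) (q + 1) half
      rw [show p + 1 + (q + 1) = p + q + 2 by ring] at this
      exact_mod_cast this
    _ ≤ compKernel [p + 3, q + 3] x y := mul_div_factorial_le_compKernel hx.1.le hy.1.le p q

end LocalInequalities

section Chambers

variable {α : Type*} [LinearOrder α] {n : ℕ}

/-- The chamber of a permutation `σ`: the vectors whose entries are in the same relative order as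
the values of `σ`. -/
def chamber (α : Type*) [LinearOrder α] {n : ℕ} (σ : Equiv.Perm (Fin n)) : Set (Fin n → α) :=
  {z | ∀ i j, z i < z j ↔ σ i < σ j}

theorem exists_mem_chamber_of_injective {z : Fin n → α} (hz : Function.Injective z) :
    ∃ σ, z ∈ chamber α σ := by
  refine ⟨(Tuple.sort z).symm, fun i j => ?_⟩
  have sorted : StrictMono (z ∘ Tuple.sort z) :=
    (Tuple.monotone_sort z).strictMono_of_injective (hz.comp (Tuple.sort z).injective)
  simpa using sorted.lt_iff_lt (a := (Tuple.sort z).symm i) (b := (Tuple.sort z).symm j)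

theorem eq_of_mem_chamber {σ τ : Equiv.Perm (Fin n)} {z : Fin n → α} (hσ : z ∈ chamber α σ)
    (hτ : z ∈ chamber α τ) : σ = τ := by
  have mono : StrictMono (σ.symm.trans τ) := fun i j hij => by
    simpa using (hτ (σ.symm i) (σ.symm j)).1 ((hσ _ _).2 (by simpa using hij))
  have trivial_iso :
      mono.orderIsoOfSurjective _ (σ.symm.trans τ).surjective = OrderIso.refl (Fin n) :=
    Subsingleton.elim _ _
  ext1 i
  simpa using (DFunLike.congr_fun trivial_iso (σ i)).symm

variable [TopologicalSpace α] [OrderClosedTopology α] [SecondCountableTopology α]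
  [MeasurableSpace α] [OpensMeasurableSpace α]

theorem measurableSet_chamber (σ : Equiv.Perm (Fin n)) : MeasurableSet (chamber α σ) := by
  simp only [chamber, Set.ofPred_forall]
  exact .iInter fun i => .iInter fun j =>
    (measurableSet_lt (measurable_pi_apply i) (measurable_pi_apply j)).iff (.const _)

variable (μ : Measure α) [IsProbabilityMeasure μ]

theorem measure_chamber (σ : Equiv.Perm (Fin n)) :
    Measure.pi (fun _ => μ) (chamber α σ) =
      Measure.pi (fun _ => μ) (chamber α (1 : Equiv.Perm (Fin n))) := by
  rw [← (measurePreserving_piCongrLeft (fun _ : Fin n => μ) σ).measure_preimage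
    (measurableSet_chamber 1).nullMeasurableSet]
  congr 1
  ext z
  have entry (i : Fin n) : MeasurableEquiv.piCongrLeft (fun _ => α) σ z (σ i) = z i :=
    Equiv.piCongrLeft_apply_apply (fun _ => α) σ z i
  exact .symm <| σ.surjective.forall₂.trans <| by simp [entry, chamber]

variable [NullSingletonClass μ]

theorem measure_pi_apply_eq_apply {i j : Fin n} (hij : i ≠ j) :
    Measure.pi (fun _ => μ) {z : Fin n → α | z i = z j} = 0 := by
  obtain _ | n := n
  · exact i.elim0
  obtain ⟨k, rfl⟩ := Fin.exists_succAbove_eq hij.symm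
  have measurable : MeasurableSet {p : α × (Fin n → α) | p.1 = p.2 k} :=
    measurableSet_eq_fun measurable_fst ((measurable_pi_apply k).comp measurable_snd)
  have slice (t : α) : Measure.pi (fun _ => μ) {y : Fin n → α | t = y k} = 0 := by
    simpa only [eq_comm] using Measure.pi_hyperplane (fun _ => μ) k t
  calc
    _ = (μ.prod (Measure.pi fun _ => μ)) {p : α × (Fin n → α) | p.1 = p.2 k} :=
      (measurePreserving_piFinSuccAbove (fun _ => μ) i).measure_preimage
        measurable.nullMeasurableSet
    _ = 0 := (Measure.measure_prod_null measurable).2 (.of_forall slice)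

theorem ae_injective_pi :
    ∀ᵐ z ∂Measure.pi (fun _ : Fin n => μ), Function.Injective z := by
  have ne (i j : Fin n) : ∀ᵐ z ∂Measure.pi (fun _ => μ), z i = z j → i = j := by
    by_cases hij : i = j
    · exact .of_forall fun _ _ => hij
    · filter_upwards [measure_eq_zero_iff_ae_notMem.1 (measure_pi_apply_eq_apply μ hij)] with z hz h
      exact absurd h hz
  filter_upwards [ae_all_iff.2 fun i => ae_all_iff.2 (ne i)] with z hz i j using hz i j

theorem measure_eq_card_mul_measure_chamber {E : Set (Fin n → α)} {p : Equiv.Perm (Fin n) → Prop}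
    (h : ∀ σ, ∀ z ∈ chamber α σ, z ∈ E ↔ p σ) :
    Measure.pi (fun _ => μ) E =
      Nat.card {σ // p σ} * Measure.pi (fun _ => μ) (chamber α (1 : Equiv.Perm (Fin n))) := by
  classical
  have cover : E =ᵐ[Measure.pi fun _ => μ] ⋃ σ ∈ Finset.univ.filter p, chamber α σ := by
    refine Filter.eventuallyEq_set.2 ?_
    filter_upwards [ae_injective_pi μ] with z hz
    obtain ⟨σ, hσ⟩ := exists_mem_chamber_of_injective hz
    simp only [h σ z hσ, Finset.mem_filter_univ, Set.mem_iUnion, exists_prop]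
    exact ⟨fun hp => ⟨σ, hp, hσ⟩, fun ⟨τ, hp, hτ⟩ => eq_of_mem_chamber hσ hτ ▸ hp⟩
  rw [measure_congr cover, measure_biUnion_finset
    (fun σ _ τ _ hne => Set.disjoint_left.2 fun z hσ hτ => hne (eq_of_mem_chamber hσ hτ))
    fun σ _ => measurableSet_chamber σ]
  simp [measure_chamber, Fintype.card_subtype]

theorem card_eq_factorial_mul_measure {E : Set (Fin n → α)} {p : Equiv.Perm (Fin n) → Prop}
    (h : ∀ σ, ∀ z ∈ chamber α σ, z ∈ E ↔ p σ) :
    (Nat.card {σ // p σ} : ENNReal) = n ! * Measure.pi (fun _ => μ) E := by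
  have total : (n ! : ENNReal) *
      Measure.pi (fun _ => μ) (chamber α (1 : Equiv.Perm (Fin n))) = 1 := by
    simpa [Fintype.card_perm] using (measure_eq_card_mul_measure_chamber μ (E := Set.univ)
      (p := fun _ => True) (by simp)).symm
  rw [measure_eq_card_mul_measure_chamber μ h, mul_left_comm, total, mul_one]

end Chambers

section PeakSets

/-- Whether the path `z` is rising when it reaches each of its points; what precedes its first point
is described by `up`. -/
def risesInto {α : Type*} [LE α] {m : ℕ} (up : Prop) (z : Fin (m + 1) → α) : Fin (m + 1) → Prop :=
  Fin.cons up fun j : Fin m => z j.castSucc ≤ z j.succ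

/-- The path `z`, entered according to `up`, has a peak at exactly those of its points, the last one
excepted, whose 1-based position lies in `S`. The last point is never tested, so it can be the
place where another path is attached. -/
def HasPeakSet {α : Type*} [LE α] {m : ℕ} (up : Prop) (S : Finset ℕ) (z : Fin (m + 1) → α) : Prop :=
  ∀ i : Fin m, (i : ℕ) + 1 ∈ S ↔ risesInto up z i.castSucc ∧ ¬ risesInto up z i.succ

variable {α β : Type*} [LinearOrder α] [LinearOrder β] {m : ℕ} {up : Prop} {S T : Finset ℕ}

theorem hasPeakSet_cons {x : α} {y : Fin (m + 1) → α} (h : ∀ i, i + 2 ∈ S ↔ i + 1 ∈ T) :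
    HasPeakSet up S (Fin.cons x y : Fin (m + 2) → α) ↔
      (1 ∈ S ↔ up ∧ ¬ x ≤ y 0) ∧ HasPeakSet (x ≤ y 0) T y := by
  have shift (i : Fin (m + 1)) :
      risesInto up (Fin.cons x y : Fin (m + 2) → α) i.succ = risesInto (x ≤ y 0) y i := by
    cases i using Fin.cases <;> simp [risesInto]
  simp only [HasPeakSet, Fin.forall_fin_succ (n := m), Fin.val_succ, ← Fin.succ_castSucc, shift,
    Fin.val_zero, zero_add, add_assoc, one_add_one_eq_two, h]
  simp only [risesInto, Fin.castSucc_zero, Fin.cons_zero, Fin.cons_succ]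

theorem hasPeakSet_congr {z : Fin (m + 1) → α} {w : Fin (m + 1) → β}
    (h : ∀ i j, z i < z j ↔ w i < w j) : HasPeakSet up S z ↔ HasPeakSet up S w := by
  have rises (i : Fin (m + 1)) : risesInto up z i ↔ risesInto up w i := by
    cases i using Fin.cases
    · simp [risesInto]
    · simpa [risesInto] using not_congr (h _ _)
  simp only [HasPeakSet, rises]

theorem measurableSet_hasPeakSet [TopologicalSpace α] [OrderClosedTopology α]
    [SecondCountableTopology α] [MeasurableSpace α] [OpensMeasurableSpace α] :
    MeasurableSet {z : Fin (m + 1) → α | HasPeakSet up S z} := by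
  have rises (i : Fin (m + 1)) : MeasurableSet {z : Fin (m + 1) → α | risesInto up z i} := by
    cases i using Fin.cases
    · exact .const up
    · exact measurableSet_le (measurable_pi_apply _) (measurable_pi_apply _)
  simp only [HasPeakSet, Set.ofPred_forall]
  exact .iInter fun i => .iff (.const _) <|
    .inter (rises i.castSucc) (rises i.succ).compl

theorem mem_compPeaks_cons {a : ℕ} {l : List ℕ} (hl : l ≠ []) {j : ℕ} :
    j ∈ compPeaks (a :: l) ↔ j = a ∨ ∃ i ∈ compPeaks l, a + i = j := by
  obtain ⟨b, l, rfl⟩ := List.exists_cons_of_ne_nil hl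
  simp only [compPeaks, List.length_cons, add_tsub_cancel_right, Finset.mem_image,
    Finset.mem_range, Nat.exists_lt_succ_left, exists_exists_and_eq_and, List.take_succ_cons]
  simp [eq_comm]

theorem compPeaks_singleton (a : ℕ) : compPeaks [a] = ∅ := by
  simp [compPeaks]

theorem mem_compPeaks_range {c : List ℕ} (hc : ∀ a ∈ c, 0 < a) {j : ℕ} (hj : j ∈ compPeaks c) :
    1 ≤ j ∧ j < c.sum := by
  induction c generalizing j with
  | nil => simp [compPeaks] at hj
  | cons a l ih =>
    rcases eq_or_ne l [] with rfl | hl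
    · simp [compPeaks_singleton] at hj
    · obtain ⟨ha, hc⟩ := List.forall_mem_cons.1 hc
      have hsum : 0 < l.sum := List.sum_pos _ hc hl
      rcases (mem_compPeaks_cons hl).1 hj with rfl | ⟨i, hi, rfl⟩
      · exact ⟨ha, by rw [List.sum_cons]; omega⟩
      · have := ih hc hi
        exact ⟨by omega, by rw [List.sum_cons]; omega⟩

theorem one_notMem_compPeaks (a : ℕ) (l : List ℕ) : 1 ∉ compPeaks ((a + 2) :: l) := by
  rcases eq_or_ne l [] with rfl | hl
  · simp [compPeaks_singleton]
  · rw [mem_compPeaks_cons hl]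
    rintro (h | ⟨i, -, h⟩) <;> omega

theorem one_mem_compPeaks {l : List ℕ} (hl : l ≠ []) : 1 ∈ compPeaks (1 :: l) :=
  (mem_compPeaks_cons hl).2 (.inl rfl)

theorem add_two_mem_compPeaks_iff (a i : ℕ) (l : List ℕ) :
    i + 2 ∈ compPeaks ((a + 2) :: l) ↔ i + 1 ∈ compPeaks ((a + 1) :: l) := by
  rcases eq_or_ne l [] with rfl | hl
  · simp [compPeaks_singleton]
  · simp only [mem_compPeaks_cons hl]
    refine or_congr (by omega) (exists_congr fun j => and_congr_right fun _ => by omega)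

theorem add_two_mem_compPeaks_one_cons_iff {l : List ℕ} (hl : l ≠ []) (i : ℕ) :
    i + 2 ∈ compPeaks (1 :: l) ↔ i + 1 ∈ compPeaks l := by
  rw [mem_compPeaks_cons hl]
  constructor
  · rintro (h | ⟨j, hj, h⟩)
    · omega
    · rwa [show i + 1 = j by omega]
  · exact fun h => .inr ⟨i + 1, h, by omega⟩

theorem mem_peakSet {n i : ℕ} {σ : Equiv.Perm (Fin n)} : i ∈ peakSet σ ↔ IsPeak σ i := by
  classical
  simp only [peakSet, Finset.mem_filter, Finset.mem_range, and_iff_right_iff_imp]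
  exact fun ⟨_, h, _⟩ => h

theorem succ_mem_peakSet_iff {σ : Equiv.Perm (Fin (m + 1))} (i : Fin m) :
    (i : ℕ) + 1 ∈ peakSet σ ↔ risesInto False σ i.castSucc ∧ ¬ risesInto False σ i.succ := by
  rw [mem_peakSet]
  obtain _ | m := m
  · exact i.elim0
  cases i using Fin.cases with
  | zero => simp [IsPeak, risesInto]
  | succ i =>
    have hne : σ i.castSucc.castSucc ≠ σ i.castSucc.succ := σ.injective.ne (by simp [Fin.ext_iff])
    simp only [risesInto, ← Fin.succ_castSucc, Fin.cons_succ, not_le, hne.le_iff_lt]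
    exact ⟨fun ⟨_, _, h⟩ => h, fun h => ⟨by simp, by simp, h⟩⟩

theorem hasPeakSet_perm_iff {σ : Equiv.Perm (Fin (m + 1))} {c : List ℕ} (hc : ∀ a ∈ c, 0 < a)
    (hsum : c.sum = m + 1) : HasPeakSet False (compPeaks c) σ ↔ peakSet σ = compPeaks c := by
  simp only [HasPeakSet, ← succ_mem_peakSet_iff]
  refine ⟨fun h => Finset.ext fun j => ?_, fun h i => by rw [h]⟩
  by_cases hj : 1 ≤ j ∧ j < m + 1
  · obtain ⟨j, rfl⟩ := Nat.exists_eq_add_of_le' hj.1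
    exact (h ⟨j, by omega⟩).symm
  · refine iff_of_false (fun hpeak => hj ?_) fun hmem => hj (hsum ▸ mem_compPeaks_range hc hmem)
    obtain ⟨_, _, _⟩ := mem_peakSet.1 hpeak
    omega

end PeakSets

section PeakVolumes

open unitInterval

theorem volume_eq_lintegral_volume_cons {m : ℕ} {E : Set (Fin (m + 1) → I)}
    (hE : MeasurableSet E) :
    volume E = ∫⁻ t, volume {y : Fin m → I | (Fin.cons t y : Fin (m + 1) → I) ∈ E} := by
  have h := (volume_preserving_piFinSuccAbove (fun _ : Fin (m + 1) => I) 0).symm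
  rw [← h.measure_preimage hE.nullMeasurableSet, Measure.volume_eq_prod,
    Measure.prod_apply (h.measurable hE)]
  simp [Set.preimage, MeasurableEquiv.piFinSuccAbove, Fin.insertNthEquiv, Fin.insertNth_zero']

/-- The volume of the paths of `m + 1` points that start at height `x` and, entered according to
`up`, have the peaks prescribed by the composition `c`. -/
noncomputable def peakVolume (up : Prop) (c : List ℕ) (m : ℕ) (x : I) : ℝ≥0∞ :=
  volume {y : Fin m → I | HasPeakSet up (compPeaks c) (Fin.cons x y : Fin (m + 1) → I)}

variable {up : Prop} {c d l : List ℕ} {a m : ℕ} {x : I}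

theorem peakVolume_zero : peakVolume up c 0 x = 1 := by
  simp [peakVolume, HasPeakSet, -Fin.cons_zero]

theorem volume_hasPeakSet_eq_lintegral (up : Prop) (c : List ℕ) (m : ℕ) :
    volume {z : Fin (m + 1) → I | HasPeakSet up (compPeaks c) z} = ∫⁻ t, peakVolume up c m t :=
  volume_eq_lintegral_volume_cons measurableSet_hasPeakSet

open Classical in
theorem peakVolume_succ (h : ∀ i, i + 2 ∈ compPeaks c ↔ i + 1 ∈ compPeaks d) :
    peakVolume up c (m + 1) x =
      (∫⁻ t in Set.Ici x, if 1 ∈ compPeaks c then 0 else peakVolume True d m t) +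
        ∫⁻ t in Set.Iio x, if 1 ∈ compPeaks c ↔ up then peakVolume False d m t else 0 := by
  have measurable : MeasurableSet {y : Fin (m + 1) → I |
      HasPeakSet up (compPeaks c) (Fin.cons x y : Fin (m + 2) → I)} := by
    have cons : Continuous fun y : Fin (m + 1) → I => (Fin.cons x y : Fin (m + 2) → I) :=
      continuous_const.finCons continuous_id
    exact cons.measurable measurableSet_hasPeakSet
  rw [peakVolume, volume_eq_lintegral_volume_cons measurable,
    ← lintegral_add_compl _ (measurableSet_Ici (a := x)), Set.compl_Ici]
  congr 1
  · refine setLIntegral_congr_fun measurableSet_Ici fun t (ht : x ≤ t) => ?_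
    by_cases h1 : 1 ∈ compPeaks c <;> simp [hasPeakSet_cons h, ht, ht.not_gt, h1, peakVolume]
  · refine setLIntegral_congr_fun measurableSet_Iio fun t (ht : t < x) => ?_
    by_cases h1 : 1 ∈ compPeaks c ↔ up <;> simp [hasPeakSet_cons h, ht, ht.not_ge, h1, peakVolume]

theorem peakVolume_true_add_two :
    peakVolume True ((a + 2) :: l) (m + 1) x =
      ∫⁻ t in Set.Ici x, peakVolume True ((a + 1) :: l) m t := by
  simp [peakVolume_succ (fun i => add_two_mem_compPeaks_iff a i l), one_notMem_compPeaks]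

theorem peakVolume_false_add_two :
    peakVolume False ((a + 2) :: l) (m + 1) x =
      (∫⁻ t in Set.Ici x, peakVolume True ((a + 1) :: l) m t) +
        ∫⁻ t in Set.Iio x, peakVolume False ((a + 1) :: l) m t := by
  simp [peakVolume_succ (fun i => add_two_mem_compPeaks_iff a i l), one_notMem_compPeaks]

theorem peakVolume_true_one_cons (hl : l ≠ []) :
    peakVolume True (1 :: l) (m + 1) x = ∫⁻ t in Set.Iio x, peakVolume False l m t := by
  simp [peakVolume_succ (add_two_mem_compPeaks_one_cons_iff hl), one_mem_compPeaks hl]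

theorem peakVolume_false_one_cons (hl : l ≠ []) : peakVolume False (1 :: l) (m + 1) x = 0 := by
  simp [peakVolume_succ (add_two_mem_compPeaks_one_cons_iff hl), one_mem_compPeaks hl]

theorem peakVolume_two_cons (hl : l ≠ []) :
    peakVolume up (2 :: l) (m + 2) x =
      ∫⁻ t in Set.Ici x, ∫⁻ s in Set.Iio t, peakVolume False l m s := by
  have descent : peakVolume True (2 :: l) (m + 2) x =
      ∫⁻ t in Set.Ici x, ∫⁻ s in Set.Iio t, peakVolume False l m s := by
    simp only [← peakVolume_true_one_cons hl, ← peakVolume_true_add_two (a := 0), zero_add]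
  by_cases h : up
  · rwa [eq_true h]
  · rw [eq_false h, ← descent]
    simp only [peakVolume_true_add_two (a := 0), peakVolume_false_add_two (a := 0), zero_add,
      peakVolume_false_one_cons hl, lintegral_zero, add_zero]

end PeakVolumes

section Segments

open unitInterval

/-- The ascent kernel: for `a ≥ 1`, the volume of the set of `t ∈ [0, 1] ^ (a - 1)` for which the
path `x, t₁, …, t_{a-1}, y` is increasing. -/
noncomputable def ascentKernel (a : ℕ) (x y : ℝ) : ℝ :=
  if x ≤ y then (y - x) ^ (a - 1) / (a - 1)! else 0

variable {a b m s : ℕ} {l : List ℕ} {x : I}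

theorem ascentKernel_nonneg (a : ℕ) (x y : ℝ) : 0 ≤ ascentKernel a x y := by
  unfold ascentKernel
  split_ifs with h
  · have := sub_nonneg.2 h
    positivity
  · exact le_rfl

theorem continuous_ascentKernel (a : ℕ) (y : ℝ) : Continuous fun x => ascentKernel (a + 2) x y :=
  .if_le (by fun_prop) (by fun_prop) (by fun_prop) (by fun_prop) fun x hx => by simp [hx]

theorem measurable_ascentKernel (a : ℕ) : Measurable fun p : ℝ × ℝ => ascentKernel a p.1 p.2 :=
  .ite (measurableSet_le measurable_fst measurable_snd) (by fun_prop) (by fun_prop)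

theorem intervalIntegrable_ascentKernel (a : ℕ) (y u v : ℝ) :
    IntervalIntegrable (fun x => ascentKernel a x y) volume u v := by
  have polynomial : Continuous fun x : ℝ => (y - x) ^ (a - 1) / (a - 1)! := by fun_prop
  have h := intervalIntegrable_iff.1 (polynomial.intervalIntegrable (μ := volume) u v)
  exact intervalIntegrable_iff.2 (h.indicator (measurableSet_Iic (a := y)))

theorem hasDerivAt_ascentKernel {x y : ℝ} (hxy : x ≠ y) :
    HasDerivAt (fun t => ascentKernel (a + 2) t y) (-ascentKernel (a + 1) x y) x := by
  rcases hxy.lt_or_gt with h | h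
  · have eq : (fun t => ascentKernel (a + 2) t y) =ᶠ[nhds x]
        fun t => (y - t) ^ (a + 1) / (a + 1)! := by
      filter_upwards [eventually_le_nhds h] with t ht
      simp [ascentKernel, ht]
    have deriv := (((hasDerivAt_id x).const_sub y).fun_pow (a + 1)).div_const ((a + 1)! : ℝ)
    refine (deriv.congr_of_eventuallyEq eq).congr_deriv ?_
    simp only [ascentKernel, h.le, if_true, id, Nat.factorial_succ, add_tsub_cancel_right]
    push_cast
    field_simp
  · have eq : (fun t => ascentKernel (a + 2) t y) =ᶠ[nhds x] fun _ => 0 := by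
      filter_upwards [eventually_gt_nhds h] with t ht
      simp [ascentKernel, ht.not_ge]
    refine ((hasDerivAt_const x (0 : ℝ)).congr_of_eventuallyEq eq).congr_deriv ?_
    simp [ascentKernel, h.not_ge]

theorem hasDerivAt_valleyKernel {x y : ℝ} (hxy : x ≠ y) :
    HasDerivAt (fun t => valleyKernel (a + 2) t y)
      (valleyKernel (a + 1) x y + ascentKernel (a + 1) x y) x := by
  have sum := ((hasDerivAt_id x).add_const y).fun_pow (a + 1)
  have diff := ((hasDerivAt_abs (sub_ne_zero.2 hxy)).comp x
    ((hasDerivAt_id x).sub_const y)).fun_pow (a + 1)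
  refine ((sum.fun_sub diff).div_const (2 * (a + 1)! : ℝ)).congr_deriv ?_
  simp only [valleyKernel, ascentKernel, Function.comp_apply, id, Nat.factorial_succ,
    add_tsub_cancel_right]
  push_cast
  rcases hxy.lt_or_gt with h | h
  · rw [if_pos h.le, sign_neg (sub_neg.2 h), abs_of_neg (sub_neg.2 h)]
    simp only [SignType.coe_neg_one, neg_sub]
    field_simp
    ring
  · rw [if_neg h.not_ge, sign_pos (sub_pos.2 h)]
    simp only [SignType.coe_one]
    field_simp
    ring

theorem integral_ascentKernel {x y : ℝ} (hx : x ≤ 1) (hy : y ≤ 1) :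
    ∫ t in x..1, ascentKernel (a + 1) t y = ascentKernel (a + 2) x y := by
  have ftc := integral_eq_of_hasDerivAt_off_countable_of_le
    (fun t => -ascentKernel (a + 2) t y) (fun t => ascentKernel (a + 1) t y) hx
    (Set.countable_singleton y) (continuous_ascentKernel a y).neg.continuousOn
    (fun t ht => (hasDerivAt_ascentKernel ht.2).fun_neg.congr_deriv (neg_neg _))
    (intervalIntegrable_ascentKernel _ y x 1)
  have end_eq_zero : ascentKernel (a + 2) 1 y = 0 := by
    rcases hy.eq_or_lt with rfl | hy
    · simp [ascentKernel]
    · simp [ascentKernel, hy.not_ge]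
  rw [ftc, end_eq_zero]
  ring

theorem integral_valleyKernel_add_ascentKernel {x y : ℝ} (hx : 0 ≤ x) (hy : 0 ≤ y) :
    ∫ t in (0 : ℝ)..x, (valleyKernel (a + 1) t y + ascentKernel (a + 1) t y) =
      valleyKernel (a + 2) x y := by
  have ftc := integral_eq_of_hasDerivAt_off_countable_of_le
    (fun t => valleyKernel (a + 2) t y)
    (fun t => valleyKernel (a + 1) t y + ascentKernel (a + 1) t y) hx
    (Set.countable_singleton y) (by fun_prop) (fun t ht => hasDerivAt_valleyKernel ht.2)
    (((by fun_prop : Continuous fun t => valleyKernel (a + 1) t y).intervalIntegrable 0 x).add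
      (intervalIntegrable_ascentKernel _ y 0 x))
  rw [ftc]
  simp [valleyKernel, abs_of_nonneg hy]

theorem setLIntegral_unitInterval {f : ℝ → ℝ} {A : Set I} (hA : MeasurableSet A)
    (hf : IntegrableOn f ((↑) '' A)) (hf0 : ∀ t ∈ I, 0 ≤ f t) :
    ∫⁻ t in A, ENNReal.ofReal (f t) = ENNReal.ofReal (∫ t in (↑) '' A, f t) := by
  have image_subset : ((↑) '' A : Set ℝ) ⊆ I := Subtype.coe_image_subset I A
  have measurable : MeasurableSet ((↑) '' A : Set ℝ) :=
    measurableEmbedding_coe.measurableSet_image.2 hA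
  rw [measurePreserving_coe.setLIntegral_comp_emb measurableEmbedding_coe
      (fun t => ENNReal.ofReal (f t)), Measure.restrict_restrict measurable,
    Set.inter_eq_left.2 image_subset, ofReal_integral_eq_lintegral_ofReal hf]
  exact (ae_restrict_iff' measurable).2 (.of_forall fun t ht => hf0 t (image_subset ht))

theorem setLIntegral_Ici_unitInterval {f : ℝ → ℝ} (hf : IntervalIntegrable f volume x 1)
    (hf0 : ∀ t ∈ I, 0 ≤ f t) :
    ∫⁻ t in Set.Ici x, ENNReal.ofReal (f t) = ENNReal.ofReal (∫ t in (x : ℝ)..1, f t) := by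
  rw [intervalIntegrable_iff_integrableOn_Icc_of_le x.2.2, ← Set.image_subtype_val_Icc_Ici] at hf
  rw [setLIntegral_unitInterval measurableSet_Ici hf hf0, Set.image_subtype_val_Icc_Ici,
    integral_Icc_eq_integral_Ioc, intervalIntegral.integral_of_le x.2.2]

theorem setLIntegral_Iio_unitInterval {f : ℝ → ℝ} (hf : IntervalIntegrable f volume 0 x)
    (hf0 : ∀ t ∈ I, 0 ≤ f t) :
    ∫⁻ t in Set.Iio x, ENNReal.ofReal (f t) = ENNReal.ofReal (∫ t in (0 : ℝ)..x, f t) := by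
  rw [intervalIntegrable_iff_integrableOn_Ico_of_le x.2.1, ← Set.image_subtype_val_Icc_Iio] at hf
  rw [setLIntegral_unitInterval measurableSet_Iio hf hf0, Set.image_subtype_val_Icc_Iio,
    integral_Ico_eq_integral_Ioc, intervalIntegral.integral_of_le x.2.1]

/-- The mass of the ascents of length `a` that start at height `x`, when the end heights carry the
measure `μ`. -/
noncomputable def ascentMass (μ : Measure I) (a : ℕ) (x : I) : ℝ≥0∞ :=
  ∫⁻ t, ENNReal.ofReal (ascentKernel a x t) ∂μ

/-- The mass of the valleys of length `a` that start at height `x`, when the end heights carry the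
measure `μ`. -/
noncomputable def valleyMass (μ : Measure I) (a : ℕ) (x : I) : ℝ≥0∞ :=
  ∫⁻ t, ENNReal.ofReal (valleyKernel a x t) ∂μ

variable (μ : Measure I)

theorem ascentMass_one : ascentMass μ 1 x = μ (Set.Ici x) := by
  rw [← lintegral_indicator_one measurableSet_Ici, ascentMass]
  congr with t
  by_cases ht : x ≤ t <;> simp [ascentKernel, ht]

theorem valleyMass_one : valleyMass μ 1 x = 0 := by
  simp [valleyMass, valleyKernel_one]

variable [SFinite μ]

theorem lintegral_ascentMass :
    ∫⁻ t in Set.Ici x, ascentMass μ (a + 1) t = ascentMass μ (a + 2) x := by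
  have measurable : Measurable fun p : I × I => ENNReal.ofReal (ascentKernel (a + 1) p.1 p.2) :=
    ((measurable_ascentKernel _).comp (by fun_prop : Measurable fun p : I × I =>
      ((p.1 : ℝ), (p.2 : ℝ)))).ennreal_ofReal
  simp only [ascentMass]
  rw [lintegral_lintegral_swap measurable.aemeasurable]
  congr with y
  rw [setLIntegral_Ici_unitInterval (f := fun t => ascentKernel (a + 1) t y)
    (intervalIntegrable_ascentKernel _ _ _ _) fun t _ => ascentKernel_nonneg _ _ _,
    integral_ascentKernel x.2.2 y.2.2]

theorem lintegral_valleyMass_add_ascentMass :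
    ∫⁻ t in Set.Iio x, (valleyMass μ (a + 1) t + ascentMass μ (a + 1) t) =
      valleyMass μ (a + 2) x := by
  have coe : Measurable fun p : I × I => ((p.1 : ℝ), (p.2 : ℝ)) := by fun_prop
  have measurable : Measurable fun p : I × I =>
      ENNReal.ofReal (valleyKernel (a + 1) p.1 p.2 + ascentKernel (a + 1) p.1 p.2) :=
    ((by fun_prop : Continuous fun p : I × I => valleyKernel (a + 1) p.1 p.2).measurable.add
      ((measurable_ascentKernel _).comp coe)).ennreal_ofReal
  have sum (t : I) : valleyMass μ (a + 1) t + ascentMass μ (a + 1) t =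
      ∫⁻ y, ENNReal.ofReal (valleyKernel (a + 1) t y + ascentKernel (a + 1) t y) ∂μ := by
    rw [valleyMass, ascentMass, ← lintegral_add_left (by fun_prop)]
    congr with y
    rw [ENNReal.ofReal_add (valleyKernel_nonneg t.2.1 y.2.1) (ascentKernel_nonneg _ _ _)]
  simp only [sum]
  rw [lintegral_lintegral_swap measurable.aemeasurable, valleyMass]
  congr with y
  rw [setLIntegral_Iio_unitInterval (f := fun t => valleyKernel (a + 1) t y +
    ascentKernel (a + 1) t y) (.add (Continuous.intervalIntegrable (by fun_prop) _ _)
      (intervalIntegrable_ascentKernel _ _ _ _))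
      fun t ht => add_nonneg (valleyKernel_nonneg ht.1 y.2.1) (ascentKernel_nonneg _ _ _),
    integral_valleyKernel_add_ascentKernel x.2.1 y.2.1]

end Segments

section Bridge

open unitInterval

variable {a b m : ℕ} {l : List ℕ}

theorem peakVolume_eq_mass {μ : Measure I} [SFinite μ]
    (h : ∀ up x, peakVolume up ((b + 1) :: l) m x = μ (Set.Ici x)) (s : ℕ) :
    (∀ x, peakVolume True ((b + s + 1) :: l) (m + s) x = ascentMass μ (s + 1) x) ∧
      ∀ x, peakVolume False ((b + s + 1) :: l) (m + s) x =
        valleyMass μ (s + 1) x + ascentMass μ (s + 1) x := by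
  induction s with
  | zero => simp [h, ascentMass_one, valleyMass_one]
  | succ s ih =>
    obtain ⟨ihT, ihF⟩ := ih
    constructor <;> intro x
    · rw [show b + (s + 1) + 1 = b + s + 2 from rfl, ← add_assoc m, peakVolume_true_add_two]
      simp only [ihT, lintegral_ascentMass]
    · rw [show b + (s + 1) + 1 = b + s + 2 from rfl, ← add_assoc m, peakVolume_false_add_two,
        add_comm]
      simp only [ihT, ihF, lintegral_ascentMass, lintegral_valleyMass_add_ascentMass]

theorem setLIntegral_Iio_peakVolume {μ : Measure I} [SFinite μ]
    (h : ∀ up x, peakVolume up ((b + 1) :: l) m x = μ (Set.Ici x)) (s : ℕ) (x : I) :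
    ∫⁻ t in Set.Iio x, peakVolume False ((b + s + 1) :: l) (m + s) t = valleyMass μ (s + 2) x := by
  simp only [(peakVolume_eq_mass h s).2, lintegral_valleyMass_add_ascentMass]

theorem valleyMass_dirac (x y : I) :
    valleyMass (Measure.dirac y) a x = ENNReal.ofReal (valleyKernel a x y) :=
  lintegral_dirac y _

theorem valleyMass_withDensity_compKernel (hl : l ≠ []) (x : I) :
    valleyMass (volume.withDensity fun t : I => ENNReal.ofReal (compKernel l t 1)) a x =
      ENNReal.ofReal (compKernel (a :: l) x 1) := by
  have integrand (t : I) : ENNReal.ofReal (compKernel l t 1) * ENNReal.ofReal (valleyKernel a x t) =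
      ENNReal.ofReal (valleyKernel a x t * compKernel l t 1) := by
    rw [mul_comm, ENNReal.ofReal_mul (valleyKernel_nonneg x.2.1 t.2.1)]
  have integral := setLIntegral_Ici_unitInterval (x := 0)
    (f := fun t => valleyKernel a x t * compKernel l t 1)
    (Continuous.intervalIntegrable (by fun_prop) _ _)
    fun t ht => mul_nonneg (valleyKernel_nonneg x.2.1 ht.1) (compKernel_nonneg ht.1 zero_le_one)
  have Ici_zero : Set.Ici (0 : I) = Set.univ := Set.Ici_bot
  rw [Ici_zero, setLIntegral_univ, Set.Icc.coe_zero] at integral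
  rw [valleyMass, lintegral_withDensity_eq_lintegral_mul _ (by fun_prop) (by fun_prop),
    compKernel_cons a hl, ← integral]
  simp only [Pi.mul_apply, integrand]

/-- Appending a virtual peak of height `1` turns the last part `a` into a valley of length `a + 1`;
the condition `t < x` makes the first part a valley as well, seen from a virtual peak of height
`x`. -/
theorem setLIntegral_peakVolume_eq_compKernel (hl : ∀ i ∈ l ++ [a], 0 < i)
    (hm : (l ++ [a]).sum = m + 1) (x : I) :
    ∫⁻ t in Set.Iio x, peakVolume False (l ++ [a]) m t =
      ENNReal.ofReal (compKernel (l ++ [a + 1]) x 1) := by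
  induction l generalizing m x with
  | nil =>
    obtain rfl : a = 0 + m + 1 := by simpa using hm
    have start (up : Prop) (x : I) : peakVolume up [0 + 1] 0 x = Measure.dirac 1 (Set.Ici x) := by
      rw [peakVolume_zero, Measure.dirac_apply_of_mem (Set.mem_Ici.2 unitInterval.le_one')]
    have valley := setLIntegral_Iio_peakVolume start m x
    rw [valleyMass_dirac] at valley
    simpa [compKernel_singleton] using valley
  | cons e l ih =>
    obtain ⟨he, htail⟩ := List.forall_mem_cons.1 hl
    obtain ⟨k, hk⟩ : ∃ k, (l ++ [a]).sum = k + 1 :=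
      Nat.exists_eq_add_of_le' (List.sum_pos _ htail (by simp))
    simp only [List.cons_append, List.sum_cons, hk] at hm
    simp only [List.cons_append]
    obtain rfl | ⟨s, rfl⟩ : e = 1 ∨ ∃ s, e = 1 + s + 1 := (Nat.succ_le_of_lt he).eq_or_lt'.imp_right
      fun h => ⟨e - 2, by omega⟩
    · obtain rfl : m = k + 1 := by omega
      simp [peakVolume_false_one_cons, compKernel_eq_zero_of_one_mem]
    · obtain rfl : m = k + 2 + s := by omega
      have start (up : Prop) (x : I) : peakVolume up ((1 + 1) :: (l ++ [a])) (k + 2) x =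
          (volume.withDensity fun t : I => ENNReal.ofReal (compKernel (l ++ [a + 1]) t 1))
            (Set.Ici x) := by
        rw [withDensity_apply _ measurableSet_Ici, one_add_one_eq_two,
          peakVolume_two_cons (by simp)]
        simp only [ih htail hk]
      rw [setLIntegral_Iio_peakVolume start, valleyMass_withDensity_compKernel (by simp),
        add_right_comm 1, add_comm]

theorem lintegral_peakVolume_eq_compKernel (hl : ∀ i ∈ l ++ [a], 0 < i)
    (hm : (l ++ [a]).sum = m + 1) :
    ∫⁻ t, peakVolume False (l ++ [a]) m t = ENNReal.ofReal (compKernel (l ++ [a + 1]) 1 1) := by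
  have null : Set.Iio (1 : I) =ᵐ[volume] Set.univ := Iio_ae_eq_Iic.trans (.of_eq Set.Iic_top)
  rw [← setLIntegral_univ, ← setLIntegral_congr null, setLIntegral_peakVolume_eq_compKernel hl hm]
  rfl

theorem Pcomp_eq_factorial_mul_compKernel (hl : ∀ i ∈ l ++ [a], 0 < i) :
    (Pcomp (l ++ [a]) : ℝ) = (l ++ [a]).sum ! * compKernel (l ++ [a + 1]) 1 1 := by
  obtain ⟨m, hm⟩ : ∃ m, (l ++ [a]).sum = m + 1 :=
    Nat.exists_eq_add_of_le' (List.sum_pos _ hl (by simp))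
  have chamber_iff (τ : Equiv.Perm (Fin (m + 1))) (z : Fin (m + 1) → I) (hz : z ∈ chamber I τ) :
      z ∈ {z | HasPeakSet False (compPeaks (l ++ [a])) z} ↔ peakSet τ = compPeaks (l ++ [a]) := by
    rw [← hasPeakSet_perm_iff hl hm]
    exact hasPeakSet_congr hz
  have card := card_eq_factorial_mul_measure (volume : Measure I) chamber_iff
  rw [← volume_pi, volume_hasPeakSet_eq_lintegral, lintegral_peakVolume_eq_compKernel hl hm] at card
  rw [Pcomp, numPeakSet, hm]
  simpa [compKernel_nonneg] using congrArg ENNReal.toReal card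

end Bridge

section MaximalCompositions

/-- A composition is kernel maximal if no composition of the same size with parts at least `2`
has a larger kernel between two virtual peaks of height `1`. -/
def IsKernelMaximal (d : List ℕ) : Prop :=
  ∀ d' : List ℕ, (∀ a ∈ d', 2 ≤ a) → d'.sum = d.sum → compKernel d' 1 1 ≤ compKernel d 1 1

theorem IsMaximal.isKernelMaximal {l : List ℕ} {a : ℕ} (hl : ∀ i ∈ l ++ [a], 0 < i)
    (hmax : IsMaximal (l ++ [a])) : IsKernelMaximal (l ++ [a + 1]) := by
  intro d' h2 hsum
  rcases d'.eq_nil_or_concat' with rfl | ⟨l', b, rfl⟩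
  · exact compKernel_nonneg zero_le_one zero_le_one
  obtain ⟨b, rfl⟩ : ∃ b', b = b' + 1 :=
    Nat.exists_eq_add_of_le' (one_le_two.trans (h2 b (by simp)))
  have pos : ∀ i ∈ l' ++ [b], 0 < i := by
    simp only [List.forall_mem_append, List.forall_mem_singleton] at h2 ⊢
    exact ⟨fun i hi => by linarith [h2.1 i hi], by omega⟩
  have sum_eq : (l' ++ [b]).sum = (l ++ [a]).sum := by
    simp only [List.sum_append, List.sum_singleton] at hsum ⊢
    omega
  have le : (Pcomp (l' ++ [b]) : ℝ) ≤ Pcomp (l ++ [a]) :=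
    Nat.cast_le.2 (hmax _ ⟨pos, sum_eq⟩)
  rw [Pcomp_eq_factorial_mul_compKernel pos, Pcomp_eq_factorial_mul_compKernel hl, sum_eq] at le
  exact le_of_mul_le_mul_left le (by positivity)

namespace IsKernelMaximal

variable {d L B B' R : List ℕ}

theorem two_le (hd : IsKernelMaximal d) (hpos : ∀ a ∈ d, 0 < a) (hlen : 2 ≤ d.length) :
    ∀ a ∈ d, 2 ≤ a := by
  intro a ha
  by_contra h
  obtain rfl : a = 1 := by have := hpos a ha; omega
  have sum_ge : 2 ≤ d.sum := hlen.trans (List.length_le_sum_of_one_le d hpos)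
  have le := hd [d.sum] (by simpa using sum_ge) (by simp)
  rw [compKernel_eq_zero_of_one_mem ha] at le
  exact le.not_gt (compKernel_pos (by simp) (by simpa using sum_ge) one_pos one_pos)

theorem not_forall_compKernel_lt (hd : IsKernelMaximal (L ++ (B ++ R)))
    (h2 : ∀ a ∈ L ++ (B ++ R), 2 ≤ a) (hB : B ≠ []) (hB' : B' ≠ []) (hB2 : ∀ a ∈ B', 2 ≤ a)
    (hsum : B'.sum = B.sum) :
    ¬∀ x ∈ boundaryHeights L, ∀ y ∈ boundaryHeights R, compKernel B x y < compKernel B' x y := by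
  intro h
  simp only [List.forall_mem_append] at h2
  refine (compKernel_replace_lt hB hB' h2.1 h2.2.2 h).not_ge (hd _ ?_ (by simp [hsum]))
  simp only [List.forall_mem_append]
  exact ⟨h2.1, hB2, h2.2.2⟩

theorem not_isInfix (hd : IsKernelMaximal d) (h2 : ∀ a ∈ d, 2 ≤ a) (hB : B ≠ []) (hB' : B' ≠ [])
    (hB2 : ∀ a ∈ B', 2 ≤ a) (hsum : B'.sum = B.sum)
    (h : ∀ x ∈ Set.Ioc (0 : ℝ) 1, ∀ y ∈ Set.Ioc (0 : ℝ) 1, compKernel B x y < compKernel B' x y) :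
    ¬B <:+: d := by
  rintro ⟨L, R, rfl⟩
  rw [List.append_assoc] at hd h2
  exact hd.not_forall_compKernel_lt h2 hB hB' hB2 hsum fun x hx y hy =>
    h x (boundaryHeights_subset L hx) y (boundaryHeights_subset R hy)

theorem not_isPrefix (hd : IsKernelMaximal d) (h2 : ∀ a ∈ d, 2 ≤ a) (hB : B ≠ []) (hB' : B' ≠ [])
    (hB2 : ∀ a ∈ B', 2 ≤ a) (hsum : B'.sum = B.sum) (hlen : B.length < d.length)
    (h : ∀ y ∈ Set.Ioo (0 : ℝ) 1, compKernel B 1 y < compKernel B' 1 y) : ¬B <+: d := by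
  rintro ⟨R, rfl⟩
  have hR : R ≠ [] := by rintro rfl; simp at hlen
  refine not_forall_compKernel_lt (L := []) hd h2 hB hB' hB2 hsum ?_
  rw [boundaryHeights_of_ne_nil hR]
  rintro x rfl
  exact h

theorem not_isSuffix (hd : IsKernelMaximal d) (h2 : ∀ a ∈ d, 2 ≤ a) (hB : B ≠ []) (hB' : B' ≠ [])
    (hB2 : ∀ a ∈ B', 2 ≤ a) (hsum : B'.sum = B.sum)
    (h : ∀ x ∈ Set.Ioc (0 : ℝ) 1, (B.length < d.length → x < 1) →
      compKernel B x 1 < compKernel B' x 1) : ¬B <:+ d := by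
  rintro ⟨L, rfl⟩
  rw [← B.append_nil] at hd h2
  refine hd.not_forall_compKernel_lt h2 hB hB' hB2 hsum ?_
  rintro x hx y rfl
  refine h x (boundaryHeights_subset L hx) fun hlen => ?_
  rw [boundaryHeights_of_ne_nil (by rintro rfl; simp at hlen)] at hx
  exact hx.2

theorem le_four (hd : IsKernelMaximal d) (h2 : ∀ a ∈ d, 2 ≤ a) (hlen : 2 ≤ d.length) :
    ∀ a ∈ d, a ≤ 4 := by
  intro a ha
  by_contra! h
  rcases (Nat.succ_le_of_lt h).eq_or_lt' with rfl | h
  · obtain ⟨L, R, rfl⟩ := List.append_of_mem ha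
    refine hd.not_forall_compKernel_lt (B := [5]) (B' := [3, 2]) h2 (by simp) (by simp) (by simp)
      (by simp) fun x hx y hy => ?_
    have ⟨hx0, hx1⟩ := boundaryHeights_subset L hx
    have ⟨hy0, hy1⟩ := boundaryHeights_subset R hy
    refine compKernel_five_lt hx0 hx1 hy0 hy1 ?_
    rcases eq_or_ne L [] with rfl | hL
    · have hR : R ≠ [] := by rintro rfl; simp at hlen
      exact .inr ((boundaryHeights_of_ne_nil hR).le hy).2
    · exact .inl ((boundaryHeights_of_ne_nil hL).le hx).2
  · obtain ⟨b, e, hb, he, rfl, lt⟩ := exists_compKernel_lt_pair h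
    exact hd.not_isInfix (B' := [b, e]) h2 (by simp) (by simp) (by simp [hb, he]) (by simp) lt
      ((List.singleton_infix_iff _ _).2 ha)

theorem eq_two_or_three_or_four (hd : IsKernelMaximal d) (h2 : ∀ a ∈ d, 2 ≤ a)
    (hlen : 2 ≤ d.length) : ∀ a ∈ d, a = 2 ∨ a = 3 ∨ a = 4 := by
  intro a ha
  have := h2 a ha
  have := hd.le_four h2 hlen a ha
  omega

theorem not_isInfix_four_four (hd : IsKernelMaximal d) (h2 : ∀ a ∈ d, 2 ≤ a) : ¬[4, 4] <:+: d :=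
  hd.not_isInfix (B' := [3, 2, 3]) h2 (by simp) (by simp) (by simp) (by simp) fun _ hx _ hy =>
    compKernel_four_four_lt hx.1 hx.2 hy.1 hy.2

theorem not_isInfix_two_four (hd : IsKernelMaximal d) (h2 : ∀ a ∈ d, 2 ≤ a) : ¬[2, 4] <:+: d :=
  hd.not_isInfix (B' := [3, 3]) h2 (by simp) (by simp) (by simp) (by simp) fun _ hx _ hy =>
    compKernel_two_four_lt hx.1 hy.1 hy.2

theorem not_isInfix_four_two (hd : IsKernelMaximal d) (h2 : ∀ a ∈ d, 2 ≤ a) : ¬[4, 2] <:+: d :=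
  hd.not_isInfix (B' := [3, 3]) h2 (by simp) (by simp) (by simp) (by simp) fun _ hx _ hy =>
    compKernel_four_two_lt hx.1 hx.2 hy.1

theorem not_isInfix_two_two_two (hd : IsKernelMaximal d) (h2 : ∀ a ∈ d, 2 ≤ a) :
    ¬[2, 2, 2] <:+: d :=
  hd.not_isInfix (B' := [3, 3]) h2 (by simp) (by simp) (by simp) (by simp) fun _ hx _ hy =>
    compKernel_two_two_two_lt hx.1 hy.1 hy.2

theorem not_isInfix_three_two_two_three (hd : IsKernelMaximal d) (h2 : ∀ a ∈ d, 2 ≤ a) :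
    ¬[3, 2, 2, 3] <:+: d :=
  hd.not_isInfix (B' := [3, 4, 3]) h2 (by simp) (by simp) (by simp) (by simp) fun _ hx _ hy =>
    compKernel_three_two_two_three_lt hx.1 hy.1

theorem not_isSuffix_three_four_three (hd : IsKernelMaximal d) (h2 : ∀ a ∈ d, 2 ≤ a) :
    ¬[3, 4, 3] <:+ d :=
  hd.not_isSuffix (B' := [3, 3, 4]) h2 (by simp) (by simp) (by simp) (by simp) fun _ hx _ =>
    compKernel_three_four_three_one_right_lt hx.1

theorem not_isSuffix_two_two (hd : IsKernelMaximal d) (h2 : ∀ a ∈ d, 2 ≤ a) : ¬[2, 2] <:+ d :=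
  hd.not_isSuffix (B' := [4]) h2 (by simp) (by simp) (by simp) (by simp) fun _ hx _ =>
    compKernel_two_two_one_right_lt hx.1 hx.2

theorem not_isSuffix_two (hd : IsKernelMaximal d) (h2 : ∀ a ∈ d, 2 ≤ a) (hlen : 3 ≤ d.length) :
    ¬[2] <:+ d := by
  rintro ⟨C, rfl⟩
  rcases C.eq_nil_or_concat' with rfl | ⟨C, b, rfl⟩
  · simp at hlen
  have isSuffix : [b, 2] <:+ C ++ [b] ++ [2] := by simp
  rcases hd.eq_two_or_three_or_four h2 (by omega) b (by simp) with rfl | rfl | rfl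
  · exact hd.not_isSuffix_two_two h2 isSuffix
  · exact hd.not_isSuffix (B' := [2, 3]) h2 (by simp) (by simp) (by simp) (by simp)
      (fun _ hx hx1 => compKernel_three_two_one_right_lt hx.1 (hx1 hlen)) isSuffix
  · exact hd.not_isInfix_four_two h2 isSuffix.isInfix

theorem not_isPrefix_two (hd : IsKernelMaximal d) (h2 : ∀ a ∈ d, 2 ≤ a) (hlen : 3 ≤ d.length) :
    ¬[2] <+: d := by
  rintro ⟨R, rfl⟩
  obtain ⟨b, R, rfl⟩ := List.exists_cons_of_ne_nil (by rintro rfl; simp at hlen : R ≠ [])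
  have isPrefix : [2, b] <+: [2] ++ b :: R := by simp
  rcases hd.eq_two_or_three_or_four h2 (by omega) b (by simp) with rfl | rfl | rfl
  · exact hd.not_isPrefix (B := [2, 2]) (B' := [4]) h2 (by simp) (by simp) (by simp) (by simp) hlen
      (fun _ hy => compKernel_two_two_one_left_lt hy.1 hy.2.le) isPrefix
  · exact hd.not_isPrefix (B := [2, 3]) (B' := [3, 2]) h2 (by simp) (by simp) (by simp) (by simp)
      hlen (fun _ hy => compKernel_two_three_one_left_lt hy.1 hy.2) isPrefix
  · exact hd.not_isInfix_two_four h2 isPrefix.isInfix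

theorem not_isInfix_two_two (hd : IsKernelMaximal d) (h2 : ∀ a ∈ d, 2 ≤ a) (hlen : 3 ≤ d.length) :
    ¬[2, 2] <:+: d := by
  rintro ⟨L, R, rfl⟩
  have parts := hd.eq_two_or_three_or_four h2 (by omega)
  rcases L.eq_nil_or_concat' with rfl | ⟨L, b, rfl⟩
  · exact hd.not_isPrefix_two h2 hlen ⟨2 :: R, rfl⟩
  rcases R with _ | ⟨q, R⟩
  · exact hd.not_isSuffix_two_two h2 ⟨L ++ [b], by simp⟩
  have left : b ≠ 2 ∧ b ≠ 4 := by
    constructor <;> rintro rfl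
    · exact hd.not_isInfix_two_two_two h2 ⟨L, q :: R, by simp⟩
    · exact hd.not_isInfix_four_two h2 ⟨L, 2 :: q :: R, by simp⟩
  have right : q ≠ 2 ∧ q ≠ 4 := by
    constructor <;> rintro rfl
    · exact hd.not_isInfix_two_two_two h2 ⟨L ++ [b], R, by simp⟩
    · exact hd.not_isInfix_two_four h2 ⟨L ++ [b, 2], R, by simp⟩
  obtain rfl : b = 3 := by have := parts b (by simp); omega
  obtain rfl : q = 3 := by have := parts q (by simp); omega
  exact hd.not_isInfix_three_two_two_three h2 ⟨L, R, by simp⟩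

end IsKernelMaximal

/-- The local structure of a kernel maximal composition: its parts are `2`, `3` and `4`, of two
neighbouring parts one is `3`, and it does not begin with `2`. -/
structure IsThreeSeparated (l : List ℕ) : Prop where
  eq_two_or_three_or_four : ∀ a ∈ l, a = 2 ∨ a = 3 ∨ a = 4
  isChain : l.IsChain fun a b => a = 3 ∨ b = 3
  not_isPrefix_two : ¬[2] <+: l

theorem IsKernelMaximal.isThreeSeparated {d : List ℕ} (hd : IsKernelMaximal d)
    (h2 : ∀ a ∈ d, 2 ≤ a) (hlen : 3 ≤ d.length) : IsThreeSeparated d where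
  eq_two_or_three_or_four := hd.eq_two_or_three_or_four h2 (by omega)
  not_isPrefix_two := hd.not_isPrefix_two h2 hlen
  isChain := by
    refine List.isChain_iff_forall_rel_of_append_cons_cons.2 fun a b L R eq => ?_
    have block : [a, b] <:+: d := ⟨L, R, by simp [eq]⟩
    have parts (e : ℕ) (he : e ∈ [a, b]) : e = 2 ∨ e = 3 ∨ e = 4 :=
      hd.eq_two_or_three_or_four h2 (by omega) e (block.subset he)
    rcases parts a (by simp) with rfl | rfl | rfl <;> rcases parts b (by simp) with rfl | rfl | rfl
    · exact absurd block (hd.not_isInfix_two_two h2 hlen)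
    · exact .inr rfl
    · exact absurd block (hd.not_isInfix_two_four h2)
    · exact .inl rfl
    · exact .inl rfl
    · exact .inl rfl
    · exact absurd block (hd.not_isInfix_four_two h2)
    · exact .inr rfl
    · exact absurd block (hd.not_isInfix_four_four h2)

end MaximalCompositions

section CanonicalForm

/-- A composition `x₀ ⊕ (3) ⊕ x₁ ⊕ (3) ⊕ ⋯ ⊕ (3) ⊕ x_k`, possibly with `k = 0`, whose blocks
satisfy the constraints on the first and the inner blocks of the canonical form. -/
def IsCanonicalPrefix (l : List ℕ) : Prop :=
  ∃ (k : ℕ) (x : ℕ → List ℕ), l = chain3 x k ∧ (x 0 = [] ∨ x 0 = [4]) ∧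
    ∀ i, 0 < i → i ≤ k → x i = [] ∨ x i = [2] ∨ x i = [4]

/-- The canonical form `x₀ ⊕ (3) ⊕ x₁ ⊕ (3) ⊕ ⋯ ⊕ (3) ⊕ x_k`, `k ≥ 1`, of a maximal composition,
with `x₀ ∈ {ε, (4)}`, `x_k ∈ {ε, (2), (2,2)}` and all other blocks in `{ε, (2), (4)}`. -/
def IsCanonicalForm (c : List ℕ) : Prop :=
  ∃ (k : ℕ) (x : ℕ → List ℕ), 1 ≤ k ∧ c = chain3 x k ∧
    (x 0 = [] ∨ x 0 = [4]) ∧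
    (x k = [] ∨ x k = [2] ∨ x k = [2, 2]) ∧
    (∀ i, 0 < i → i < k → x i = [] ∨ x i = [2] ∨ x i = [4])

variable {l l' v : List ℕ} {a e : ℕ}

theorem chain3_congr {x y : ℕ → List ℕ} {k : ℕ} (h : ∀ i ≤ k, x i = y i) :
    chain3 x k = chain3 y k := by
  induction k with
  | zero => exact h 0 le_rfl
  | succ k ih => rw [chain3, chain3, ih fun i hi => h i (by omega), h (k + 1) le_rfl]

theorem chain3_update_succ (x : ℕ → List ℕ) (k : ℕ) (v : List ℕ) :
    chain3 (Function.update x (k + 1) v) (k + 1) = chain3 x k ++ [3] ++ v := by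
  rw [chain3, Function.update_self,
    chain3_congr (y := x) fun i hi => Function.update_of_ne (by omega) ..]

namespace IsCanonicalPrefix

theorem append_three_append (hl : IsCanonicalPrefix l) (hv : v = [] ∨ v = [2] ∨ v = [4]) :
    IsCanonicalPrefix (l ++ [3] ++ v) := by
  obtain ⟨k, x, rfl, first, inner⟩ := hl
  refine ⟨k + 1, Function.update x (k + 1) v, (chain3_update_succ x k v).symm, ?_, ?_⟩
  · rwa [Function.update_of_ne (by omega)]
  · intro i hi hik
    rcases hik.eq_or_lt with rfl | hik
    · rwa [Function.update_self]
    · rw [Function.update_of_ne hik.ne]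
      exact inner i hi (by omega)

theorem isCanonicalForm (hl : IsCanonicalPrefix l) (hv : v = [] ∨ v = [2] ∨ v = [2, 2]) :
    IsCanonicalForm (l ++ [3] ++ v) := by
  obtain ⟨k, x, rfl, first, inner⟩ := hl
  refine ⟨k + 1, Function.update x (k + 1) v, by omega, (chain3_update_succ x k v).symm, ?_, ?_, ?_⟩
  · rwa [Function.update_of_ne (by omega)]
  · rwa [Function.update_self]
  · intro i hi hik
    rw [Function.update_of_ne hik.ne]
    exact inner i hi (by omega)

end IsCanonicalPrefix

namespace IsThreeSeparated

theorem of_isPrefix (hl : IsThreeSeparated l) (h : l' <+: l) : IsThreeSeparated l' where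
  eq_two_or_three_or_four a ha := hl.eq_two_or_three_or_four a (h.subset ha)
  isChain := by
    obtain ⟨r, rfl⟩ := h
    exact hl.isChain.left_of_append
  not_isPrefix_two h2 := hl.not_isPrefix_two (h2.trans h)

theorem eq_nil_or_exists_append_three (hl : IsThreeSeparated (l ++ [a])) (ha : a ≠ 3) :
    l = [] ∨ ∃ l', l = l' ++ [3] := by
  rcases l.eq_nil_or_concat' with rfl | ⟨l', b, rfl⟩
  · exact .inl rfl
  · obtain rfl : b = 3 := by
      have := List.isChain_iff_forall_rel_of_append_cons_cons.1 hl.isChain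
        (show l' ++ [b] ++ [a] = l' ++ b :: a :: [] by simp)
      omega
    exact .inr ⟨l', rfl⟩

theorem isCanonicalPrefix (hl : IsThreeSeparated l) : IsCanonicalPrefix l := by
  induction h : l.length using Nat.strong_induction_on generalizing l with | _ n ih =>
  have shorter {l' r : List ℕ} (eq : l = l' ++ r) (hr : r ≠ []) : IsCanonicalPrefix l' := by
    refine ih l'.length ?_ (hl.of_isPrefix ⟨r, eq.symm⟩) rfl
    simpa [← h, eq, List.length_pos_iff] using hr
  rcases l.eq_nil_or_concat' with rfl | ⟨l', a, rfl⟩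
  · exact ⟨0, fun _ => [], rfl, .inl rfl, fun _ _ _ => .inl rfl⟩
  rcases eq_or_ne a 3 with rfl | ha
  · simpa using (shorter rfl (by simp)).append_three_append (.inl rfl)
  rcases hl.eq_nil_or_exists_append_three ha with rfl | ⟨l', rfl⟩
  · rcases hl.eq_two_or_three_or_four a (by simp) with rfl | rfl | rfl
    · exact absurd (List.prefix_refl [2]) hl.not_isPrefix_two
    · exact absurd rfl ha
    · exact ⟨0, fun _ => [4], rfl, .inr rfl, fun i hi hi0 => by omega⟩
  · refine (shorter (List.append_assoc ..) (by simp)).append_three_append ?_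
    simpa [ha] using hl.eq_two_or_three_or_four a (by simp)

theorem isCanonicalForm (hl : IsThreeSeparated (l ++ [e + 1])) (hlen : 2 ≤ l.length)
    (two : ¬[2] <:+ l ++ [e + 1]) (three_four_three : ¬[3, 4, 3] <:+ l ++ [e + 1]) :
    IsCanonicalForm (l ++ [e]) := by
  obtain ⟨l, u, rfl⟩ := l.eq_nil_or_concat'.resolve_left (by rintro rfl; simp at hlen)
  have l_ne : l ≠ [] := by rintro rfl; simp at hlen
  have ends_three (hu : u ≠ 3) : ∃ l', l = l' ++ [3] :=
    ((hl.of_isPrefix (List.prefix_append _ _)).eq_nil_or_exists_append_three hu).resolve_left l_ne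
  have init {l' : List ℕ} (h : l' <+: l ++ [u] ++ [e + 1]) : IsCanonicalPrefix l' :=
    (hl.of_isPrefix h).isCanonicalPrefix
  obtain rfl | rfl | rfl : e = 1 ∨ e = 2 ∨ e = 3 := by
    have := hl.eq_two_or_three_or_four (e + 1) (by simp)
    omega
  · exact absurd (List.suffix_append _ _) two
  · rcases hl.eq_two_or_three_or_four u (by simp) with rfl | rfl | rfl
    · obtain ⟨l', rfl⟩ := ends_three (by simp)
      have canonical : IsCanonicalPrefix l' := init ⟨[3, 2, 3], by simp⟩
      simpa using canonical.isCanonicalForm (v := [2, 2]) (by simp)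
    · have canonical : IsCanonicalPrefix l := init ⟨[3, 3], by simp⟩
      exact canonical.isCanonicalForm (by simp)
    · obtain ⟨l', rfl⟩ := ends_three (by simp)
      exact absurd ⟨l', by simp⟩ three_four_three
  · obtain ⟨l', eq⟩ := (hl.eq_nil_or_exists_append_three (by simp)).resolve_left (by simp)
    obtain ⟨-, rfl⟩ := List.append_singleton_inj.1 eq
    simpa using (init (List.prefix_append (l ++ [3]) _)).isCanonicalForm (v := []) (by simp)

end IsThreeSeparated

end CanonicalForm

theorem canonical_form_two (n : ℕ) (c : List ℕ) (hc : IsComposition n c)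
    (hlen : 3 ≤ c.length) (hmax : IsMaximal c) :
    ∃ (k : ℕ) (x : ℕ → List ℕ), 1 ≤ k ∧ c = chain3 x k ∧
      (x 0 = [] ∨ x 0 = [4]) ∧
      (x k = [] ∨ x k = [2] ∨ x k = [2, 2]) ∧
      (∀ i, 0 < i → i < k → x i = [] ∨ x i = [2] ∨ x i = [4]) := by
  obtain ⟨l, a, rfl⟩ := c.eq_nil_or_concat'.resolve_left (by rintro rfl; simp at hlen)
  have maximal : IsKernelMaximal (l ++ [a + 1]) := hmax.isKernelMaximal hc.1
  have hlen' : 3 ≤ (l ++ [a + 1]).length := by simpa using hlen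
  have pos : ∀ i ∈ l ++ [a + 1], 0 < i :=
    List.forall_mem_append.2 ⟨(List.forall_mem_append.1 hc.1).1, by simp⟩
  have two_le : ∀ i ∈ l ++ [a + 1], 2 ≤ i := maximal.two_le pos (by omega)
  exact (maximal.isThreeSeparated two_le hlen').isCanonicalForm (by simpa using hlen)
    (maximal.not_isSuffix_two two_le hlen') (maximal.not_isSuffix_three_four_three two_le)
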